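/- Let d ≥ 3. Let N ≥ 1 and let D ⊆ Z^d satisfy Q_{4N} ⊆ D. Let 8 ≤ m ≤ N/2 and n ≤ N. Suppose 𝒦 is an arbitrary nonempty subset of Q_n and x₀ ∈ 𝒦 ∩ H_n, and let z₀ = x₀ + m e₁. Then there exists a constant c = c(d) > 0 such that P^{z₀}( T_{Q(x₀,m/2)} > τ_D | T_𝒦 > τ_D ) ≥ c. -/

import Mathlib

open MeasureTheory
open scoped ENNReal Classical

namespace USFPaper

/-- Vertices of the nearest-neighbour integer lattice `ℤ^d`. -/
abbrev V (d : ℕ) := Fin d → ℤ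

variable {d : ℕ}

/-- Nearest-neighbour adjacency in `ℤ^d`. -/
def adj (x y : V d) : Prop := (∑ i, |x i - y i|) = 1

/-- The cube `Q(x,r) = { y : ‖x - y‖_∞ ≤ r }`. -/
def cube (x : V d) (r : ℕ) : Set (V d) := { y | ∀ i, |y i - x i| ≤ (r : ℤ) }

/-- Inner boundary `∂ᵢA` of a set `A`. -/
def innerBdry (A : Set (V d)) : Set (V d) := { x | x ∈ A ∧ ∃ y, adj x y ∧ y ∉ A }

/-- Euclidean distance on `ℤ^d`. -/
noncomputable def eudist (x y : V d) : ℝ := Real.sqrt (∑ i, ((x i : ℝ) - (y i : ℝ)) ^ 2)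

/-- The `k`-th coordinate unit vector. -/
def unitVec (k : ℕ) : V d := fun i => if (i : ℕ) = k then 1 else 0

/-- `μ` is the law of simple random walk on `ℤ^d` started at `x`, as a probability
measure on path space: every nearest-neighbour cylinder of length `n` starting at `x`
has probability `(2d)⁻ⁿ`. -/
def IsSRWLaw (μ : Measure (ℕ → V d)) (x : V d) : Prop :=
  IsProbabilityMeasure μ ∧
  ∀ (n : ℕ) (γ : ℕ → V d), γ 0 = x → (∀ i < n, adj (γ i) (γ (i + 1))) →
    μ { ω | ∀ i ≤ n, ω i = γ i } = (2 * (d : ℝ≥0∞))⁻¹ ^ n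

/-- First exit time `τ_A` from `A`, valued in `ℕ∞` (`⊤` if the path never leaves `A`). -/
noncomputable def exitTimeE (A : Set (V d)) (ω : ℕ → V d) : ENat :=
  if h : ∃ j, ω j ∉ A then (Nat.find h : ENat) else ⊤

/-- First hitting time `T_A` of `A`, valued in `ℕ∞`. -/
noncomputable def hitTimeE (A : Set (V d)) (ω : ℕ → V d) : ENat :=
  if h : ∃ j, ω j ∈ A then (Nat.find h : ENat) else ⊤

/-- First positive hitting time `T⁺_A` of `A`, valued in `ℕ∞`. -/
noncomputable def hitTimePosE (A : Set (V d)) (ω : ℕ → V d) : ENat :=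
  if h : ∃ j, 1 ≤ j ∧ ω j ∈ A then (Nat.find h : ENat) else ⊤

/-- First exit time from `A` as a natural number (junk value `0` if the path never exits). -/
noncomputable def exitTime (A : Set (V d)) (ω : ℕ → V d) : ℕ := (exitTimeE A ω).toNat

/-- Index of the first hit of `A` (junk value `0` if `A` is never hit). -/
noncomputable def hitIdx (A : Set (V d)) (γ : ℕ → V d) : ℕ := (hitTimeE A γ).toNat

/-- First index `≥ t` at which the path lies in `A` (junk value `t`). -/
noncomputable def hitIdxFrom (A : Set (V d)) (t : ℕ) (γ : ℕ → V d) : ℕ :=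
  if h : ∃ j, t ≤ j ∧ γ j ∈ A then Nat.find h else t

/-- The path frozen at its first exit from `D`. -/
noncomputable def stopAt (D : Set (V d)) (ω : ℕ → V d) : ℕ → V d :=
  fun j => if (j : ENat) ≤ exitTimeE D ω then ω j else ω (exitTime D ω)

/-- Time of the last visit of the path to the point `ω t`, at or after time `t`
(junk value if there are infinitely many such visits). -/
noncomputable def lastVisit (ω : ℕ → V d) (t : ℕ) : ℕ := sSup { j | t ≤ j ∧ ω j = ω t }

/-- The times of the chronological loop erasure (last-exit decomposition). -/
noncomputable def leTime (ω : ℕ → V d) : ℕ → ℕ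
  | 0 => lastVisit ω 0
  | k + 1 => lastVisit ω (leTime ω k + 1)

/-- Chronological loop erasure of an (infinite, transient) path. -/
noncomputable def infLoopErase (ω : ℕ → V d) : ℕ → V d := fun k => ω (leTime ω k)

/-- The loop erasure `L` of the walk stopped at its first exit from `D`. -/
noncomputable def lerw (D : Set (V d)) (ω : ℕ → V d) : ℕ → V d := infLoopErase (stopAt D ω)

/-- The event `T_A > τ_D`: the walk does not visit `A` at any time up to (and
including) its first exit from `D`; if it never exits `D`, it never visits `A`. -/
def avoidBeforeExit (D A : Set (V d)) (ω : ℕ → V d) : Prop :=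
  ∀ j : ℕ, (j : ENat) ≤ exitTimeE D ω → ω j ∉ A

/-- The event `T⁺_A > τ_D` (visits of `A` at positive times only). -/
def avoidBeforeExitPos (D A : Set (V d)) (ω : ℕ → V d) : Prop :=
  ∀ j : ℕ, 1 ≤ j → (j : ENat) ≤ exitTimeE D ω → ω j ∉ A

/-- The right-hand face (in the first coordinate direction) of the cube `Q(x₀,m)`. -/
def rightFace (x₀ : V d) (m : ℕ) : Set (V d) :=
  { y | y ∈ cube x₀ m ∧ ∀ i : Fin d, (i : ℕ) = 0 → y i = x₀ i + (m : ℤ) }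

/-!
The conditional probability is `avoidProb D (𝒦 ∪ Q(x₀, m/2)) / avoidProb D 𝒦` at `z₀`, and the task
is to bound it below. Take first `D = ℤ^d` and write `h` and `g` for the two avoidance
probabilities, which are harmonic off the sets avoided. As `𝒦` lies in the half-space `y₁ ≤ n`, a
reflection coupling makes `h` grow (up to parity) along the ray `x₀ + s e₁`, and the Harnack
inequality bounds `h` on the box `Q(x₀, m/2)` by `C h(z)`, where `z = x₀ + H e₁` and `H = (2B+1) m`.
Walks started at `z` hit the box with probability at most `O((m/H)^(2/3))`, as witnessed by the
superharmonic function `(‖y - x₀‖² + 1600)^(-1/3)`. Hence `h(z) ≤ 2 g(z)` once `B` is large, and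
Harnack's inequality along the segment from `z` to `z₀` yields `h(z₀) ≤ h(z) ≤ 2 g(z) ≤ C' g(z₀)`.
For general `D`, the same superharmonic function shows that a walk started outside `Q_{2N}` avoids
`𝒦` for ever with probability bounded below, so replacing `D` by `ℤ^d` costs a constant factor.

The Harnack inequality rests on the gradient estimate obtained by comparing `u - u ∘ reflection`
with a barrier, and on a maximum of `u` weighted by a power of the distance to the boundary.
-/

open Finset
open scoped BigOperators

/-- The unit step of the walk in direction `p.1` with sign `p.2`; the `2d` neighbours of `x` are
the points `x + step p`. -/
def step (p : Fin d × ℤˣ) : V d := Pi.single p.1 (p.2 : ℤ)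

/-- The average of `u` over the neighbours of `x`, i.e. the transition operator of simple random
walk applied to `u`. -/
noncomputable def nbrAvg (u : V d → ℝ) (x : V d) : ℝ := 𝔼 p, u (x + step p)

/-- Discrete subharmonicity of `u` at the points of `s`; the values of `u` at the neighbours of
`s` are involved. -/
def IsSubharmonicOn (u : V d → ℝ) (s : Set (V d)) : Prop := ∀ x ∈ s, u x ≤ nbrAvg u x

/-- Discrete superharmonicity of `u` at the points of `s`. -/
def IsSuperharmonicOn (u : V d → ℝ) (s : Set (V d)) : Prop := ∀ x ∈ s, nbrAvg u x ≤ u x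

/-- Discrete harmonicity of `u` at the points of `s`. -/
def IsHarmonicOn (u : V d → ℝ) (s : Set (V d)) : Prop := ∀ x ∈ s, nbrAvg u x = u x

lemma step_one (i : Fin d) : step (i, 1) = Pi.single i 1 := by simp [step]

lemma step_neg (i : Fin d) (ε : ℤˣ) : step (i, -ε) = -step (i, ε) := by
  simp [step, Pi.single_neg]

lemma step_apply (p : Fin d × ℤˣ) (j : Fin d) : step p j = if j = p.1 then (p.2 : ℤ) else 0 := by
  simp [step, Pi.single_apply]

lemma abs_step_apply_le (p : Fin d × ℤˣ) (j : Fin d) : |step p j| ≤ 1 := by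
  rw [step_apply]
  split_ifs
  · exact (Int.isUnit_iff_abs_eq.1 p.2.isUnit).le
  · simp

section nbrAvg

variable {u v : V d → ℝ} {x : V d}

lemma nbrAvg_mono (h : ∀ p, u (x + step p) ≤ v (x + step p)) : nbrAvg u x ≤ nbrAvg v x :=
  expect_le_expect fun p _ ↦ h p

lemma nbrAvg_nonneg (h : ∀ p, 0 ≤ u (x + step p)) : 0 ≤ nbrAvg u x :=
  expect_nonneg fun p _ ↦ h p

lemma nbrAvg_const [NeZero d] (a : ℝ) (x : V d) : nbrAvg (fun _ ↦ a) x = a :=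
  Fintype.expect_const a

lemma nbrAvg_sub (u v : V d → ℝ) (x : V d) :
    nbrAvg (fun y ↦ u y - v y) x = nbrAvg u x - nbrAvg v x :=
  expect_sub_distrib _ _ _

lemma nbrAvg_const_mul (a : ℝ) (u : V d → ℝ) (x : V d) :
    nbrAvg (fun y ↦ a * u y) x = a * nbrAvg u x :=
  (mul_expect _ _ _).symm

lemma nbrAvg_comp_add (u : V d → ℝ) (a x : V d) :
    nbrAvg (fun y ↦ u (y + a)) x = nbrAvg u (x + a) := by
  simp only [nbrAvg, add_right_comm]

lemma nbrAvg_eq_sum_div (u : V d → ℝ) (x : V d) :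
    nbrAvg u x =
      (∑ i, (u (x + Pi.single i 1) + u (x + Pi.single i (-1)))) / (2 * d) := by
  simp [nbrAvg, Fintype.expect_eq_sum_div_card, Fintype.sum_prod_type, UnitsInt.univ,
    step, mul_comm]

lemma le_mul_nbrAvg [NeZero d] (hu : ∀ y, 0 ≤ u y) (x : V d) (p : Fin d × ℤˣ) :
    u (x + step p) ≤ 2 * d * nbrAvg u x := by
  have hd : (d : ℝ) ≠ 0 := NeZero.ne _
  have hsum : 2 * d * nbrAvg u x = ∑ p, u (x + step p) := by
    simp only [nbrAvg, Fintype.expect_eq_sum_div_card, Fintype.card_prod, Fintype.card_fin,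
      Fintype.card_units_int]
    push_cast
    field_simp
  exact hsum ▸ single_le_sum (f := fun p ↦ u (x + step p)) (fun p _ ↦ hu _) (mem_univ p)

end nbrAvg

section Predicates

variable {u v : V d → ℝ} {s t : Set (V d)}

lemma IsHarmonicOn.mono (hu : IsHarmonicOn u s) (h : t ⊆ s) : IsHarmonicOn u t :=
  fun x hx ↦ hu x (h hx)

lemma IsHarmonicOn.isSubharmonicOn (hu : IsHarmonicOn u s) : IsSubharmonicOn u s :=
  fun x hx ↦ (hu x hx).ge

lemma IsHarmonicOn.isSuperharmonicOn (hu : IsHarmonicOn u s) : IsSuperharmonicOn u s :=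
  fun x hx ↦ (hu x hx).le

lemma IsHarmonicOn.const_mul (hu : IsHarmonicOn u s) (a : ℝ) :
    IsHarmonicOn (fun x ↦ a * u x) s := fun x hx ↦ by rw [nbrAvg_const_mul, hu x hx]

lemma IsSuperharmonicOn.const_mul (hu : IsSuperharmonicOn u s) {a : ℝ} (ha : 0 ≤ a) :
    IsSuperharmonicOn (fun x ↦ a * u x) s := fun x hx ↦ by
  rw [nbrAvg_const_mul]
  exact mul_le_mul_of_nonneg_left (hu x hx) ha

lemma IsSubharmonicOn.sub (hu : IsSubharmonicOn u s) (hv : IsSuperharmonicOn v s) :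
    IsSubharmonicOn (fun x ↦ u x - v x) s := fun x hx ↦ by
  rw [nbrAvg_sub]
  exact sub_le_sub (hu x hx) (hv x hx)

end Predicates

section Comparison

variable [NeZero d] {u v : V d → ℝ} {U : Set (V d)}

/- Among the maximizers of `u` over `U`, take one with largest zeroth coordinate; its neighbour
in that direction is not a maximiser, so the average there is too small. -/
lemma IsSubharmonicOn.nonpos_of_finite (hU : U.Finite) (hu : IsSubharmonicOn u U)
    (hbd : ∀ x ∈ U, ∀ p, x + step p ∉ U → u (x + step p) ≤ 0) : ∀ x ∈ U, u x ≤ 0 := by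
  by_contra! ⟨x, hxU, hx⟩
  obtain ⟨y, hyU, hy⟩ := Set.exists_max_image U u hU ⟨x, hxU⟩
  obtain ⟨z, ⟨hzU, hzy⟩, hz⟩ := Set.exists_max_image {w ∈ U | u w = u y} (fun w ↦ w 0)
    (hU.sep _) ⟨y, hyU, rfl⟩
  have hpos : 0 < u z := hzy ▸ hx.trans_le (hy x hxU)
  have hle (p) : u (z + step p) ≤ u z := by
    by_cases hp : z + step p ∈ U
    · exact hzy ▸ hy _ hp
    · exact (hbd z hzU p hp).trans hpos.le
  have hlt : u (z + step (0, 1)) < u z := by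
    refine (hle _).lt_of_ne fun heq ↦ ?_
    by_cases hp : z + step (0, 1) ∈ U
    · have := hz _ ⟨hp, heq.trans hzy⟩
      simp [step_apply] at this
    · exact hpos.not_ge (heq ▸ hbd z hzU _ hp)
  have : nbrAvg u z < u z := (expect_lt_expect (fun p _ ↦ hle p) ⟨(0, 1), mem_univ _, hlt⟩).trans_eq
    (nbrAvg_const (u z) z)
  exact this.not_ge (hu z hzU)

theorem IsSubharmonicOn.le_of_isSuperharmonicOn (hU : U.Finite) (hu : IsSubharmonicOn u U)
    (hv : IsSuperharmonicOn v U)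
    (hbd : ∀ x ∈ U, ∀ p, x + step p ∉ U → u (x + step p) ≤ v (x + step p)) :
    ∀ x ∈ U, u x ≤ v x := fun x hx ↦
  sub_nonpos.1 <| (hu.sub hv).nonpos_of_finite hU
    (fun x hx p hp ↦ sub_nonpos.2 (hbd x hx p hp)) x hx

end Comparison

section Cubes

variable {x y z : V d} {r s : ℕ}

lemma mem_cube : y ∈ cube x r ↔ ∀ i, |y i - x i| ≤ r := Iff.rfl

lemma notMem_cube : y ∉ cube x r ↔ ∃ i, r < |y i - x i| := by simp [mem_cube]

lemma cube_eq_Icc (x : V d) (r : ℕ) :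
    cube x r = Set.Icc (x - fun _ ↦ (r : ℤ)) (x + fun _ ↦ (r : ℤ)) := by
  ext y
  simp only [mem_cube, Set.mem_Icc, Pi.le_def, abs_le, ← forall_and]
  exact forall_congr' fun i ↦ by simp only [Pi.sub_apply, Pi.add_apply]; omega

lemma finite_cube (x : V d) (r : ℕ) : (cube x r).Finite := cube_eq_Icc x r ▸ Set.finite_Icc _ _

lemma self_mem_cube (x : V d) (r : ℕ) : x ∈ cube x r := fun i ↦ by simp

lemma mem_cube_comm : y ∈ cube x r ↔ x ∈ cube y r := by simp only [mem_cube, abs_sub_comm]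

lemma mem_cube_add (hy : y ∈ cube x r) (hz : z ∈ cube y s) : z ∈ cube x (r + s) := fun i ↦ by
  have := abs_sub_le (z i) (y i) (x i)
  have := hy i
  have := hz i
  omega

lemma cube_subset_cube (h : r ≤ s) : cube x r ⊆ cube x s := fun y hy i ↦ by
  have := hy i
  omega

lemma cube_subset_cube_of_mem (hy : y ∈ cube x r) {t : ℕ} (h : r + s ≤ t) : cube y s ⊆ cube x t :=
  fun _ hz ↦ cube_subset_cube h (mem_cube_add hy hz)

lemma add_single_mem_cube (x : V d) (i : Fin d) (r : ℕ) : x + Pi.single i (r : ℤ) ∈ cube x r :=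
  fun j ↦ by
    rw [Pi.add_apply, add_sub_cancel_left, Pi.single_apply]
    split_ifs
    · exact (Nat.abs_cast r).le
    · simp

lemma add_step_mem_cube (hy : y ∈ cube x r) (p : Fin d × ℤˣ) : y + step p ∈ cube x (r + 1) :=
  mem_cube_add hy fun i ↦ by simpa using abs_step_apply_le p i

end Cubes

section sqNorm

/-- The squared Euclidean norm of a lattice point. -/
def sqNorm (x : V d) : ℝ := ∑ i, (x i : ℝ) ^ 2

variable {x y : V d}

lemma sqNorm_nonneg (x : V d) : 0 ≤ sqNorm x := sum_nonneg fun _ _ ↦ sq_nonneg _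

lemma sqNorm_add_single (x : V d) (i : Fin d) (a : ℤ) :
    sqNorm (x + Pi.single i a) = sqNorm x + 2 * a * x i + a ^ 2 := by
  have h (j : Fin d) : (((x + Pi.single i a : V d) j : ℤ) : ℝ) ^ 2 =
      (x j : ℝ) ^ 2 + if j = i then 2 * (a : ℝ) * x i + a ^ 2 else 0 := by
    by_cases hj : j = i
    · subst hj
      simp
      ring
    · simp [hj]
  simp only [sqNorm, h, sum_add_distrib, sum_ite_eq', mem_univ, if_true]
  ring

lemma sqNorm_single (i : Fin d) (a : ℤ) : sqNorm (Pi.single i a) = (a : ℝ) ^ 2 := by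
  simpa [sqNorm] using sqNorm_add_single (0 : V d) i a

lemma sq_apply_le_sqNorm (x : V d) (i : Fin d) : (x i : ℝ) ^ 2 ≤ sqNorm x :=
  single_le_sum (f := fun i ↦ (x i : ℝ) ^ 2) (fun _ _ ↦ sq_nonneg _) (mem_univ i)

lemma sq_le_sqNorm_sub {n : ℕ} {i : Fin d} (h : (n : ℤ) ≤ |y i - x i|) :
    (n : ℝ) ^ 2 ≤ sqNorm (y - x) := by
  refine le_trans ?_ (sq_apply_le_sqNorm (y - x) i)
  rw [← sq_abs ((y - x) i : ℝ)]
  gcongr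
  exact_mod_cast h

lemma sqNorm_sub_le_of_mem_cube {r : ℕ} (h : y ∈ cube x r) : sqNorm (y - x) ≤ d * (r : ℝ) ^ 2 := by
  have hle (i : Fin d) : (((y - x) i : ℤ) : ℝ) ^ 2 ≤ (r : ℝ) ^ 2 := by
    rw [← sq_abs (((y - x) i : ℤ) : ℝ)]
    gcongr
    exact_mod_cast h i
  calc sqNorm (y - x) ≤ ∑ _i : Fin d, (r : ℝ) ^ 2 := sum_le_sum fun i _ ↦ hle i
    _ = d * (r : ℝ) ^ 2 := by simp

end sqNorm

section Reflection

/-- The reflection of `ℤ^d` in the hyperplane `{x | 2 * x i = b}`. -/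
def reflect (i : Fin d) (b : ℤ) (x : V d) : V d := Function.update x i (b - x i)

variable {i : Fin d} {b : ℤ} {x y : V d}

lemma reflect_apply_self : reflect i b x i = b - x i := by simp [reflect]

lemma reflect_apply_of_ne {j : Fin d} (h : j ≠ i) : reflect i b x j = x j := by simp [reflect, h]

lemma reflect_eq_self (h : 2 * x i = b) : reflect i b x = x := by
  rw [reflect, Function.update_eq_self_iff]
  omega

lemma reflect_mem_cube {r : ℕ} (hy : y ∈ cube x r) : reflect i (2 * x i) y ∈ cube x r := by
  intro j
  by_cases hj : j = i
  · subst hj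
    have := hy j
    rw [abs_le] at this
    rw [reflect_apply_self, abs_le]
    omega
  · rw [reflect_apply_of_ne hj]
    exact hy j

/-- The action of a reflection on unit steps. -/
def reflectStep (i : Fin d) (p : Fin d × ℤˣ) : Fin d × ℤˣ := (p.1, if p.1 = i then -p.2 else p.2)

lemma reflectStep_involutive (i : Fin d) : Function.Involutive (reflectStep i) := by
  rintro ⟨j, ε⟩
  by_cases h : j = i <;> simp [reflectStep, h]

lemma reflect_add_step (i : Fin d) (b : ℤ) (x : V d) (p : Fin d × ℤˣ) :
    reflect i b (x + step p) = reflect i b x + step (reflectStep i p) := by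
  ext j
  by_cases hj : j = i
  · subst hj
    by_cases hp : j = p.1
    · simp [reflect_apply_self, step_apply, reflectStep, hp]
      ring
    · simp [reflect_apply_self, step_apply, reflectStep, hp]
  · by_cases hp : p.1 = i <;> simp [reflect_apply_of_ne hj, step_apply, reflectStep, hp, hj]

lemma nbrAvg_comp_reflect (u : V d → ℝ) (i : Fin d) (b : ℤ) (x : V d) :
    nbrAvg (fun y ↦ u (reflect i b y)) x = nbrAvg u (reflect i b x) :=
  Fintype.expect_equiv (reflectStep_involutive i).toPerm _ _ fun p ↦
    congrArg u (reflect_add_step i b x p)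

end Reflection

section Gradient

/-- The barrier for the gradient estimate: a discrete harmonic polynomial which is nonnegative on
the slab `0 ≤ w j ≤ S` and at least `S ^ 2` on the part of the slab outside the cube of radius
`S`. -/
def gradBarrier (j : Fin d) (S : ℝ) (w : V d) : ℝ := sqNorm w + d * (w j * (S - w j))

variable {u : V d → ℝ} {x y : V d} {s : ℕ} {a b S : ℝ} {j : Fin d}

lemma nbrAvg_gradBarrier (j : Fin d) (S : ℝ) (w : V d) :
    nbrAvg (gradBarrier j S) w = gradBarrier j S w := by
  have hd : (d : ℝ) ≠ 0 := by exact_mod_cast j.pos.ne'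
  have h (i : Fin d) :
      gradBarrier j S (w + Pi.single i 1) + gradBarrier j S (w + Pi.single i (-1)) =
        2 * gradBarrier j S w + 2 - if i = j then 2 * (d : ℝ) else 0 := by
    by_cases hij : i = j
    · subst hij
      simp [gradBarrier, sqNorm_add_single]
      ring
    · simp [gradBarrier, sqNorm_add_single, hij, Ne.symm hij]
      ring
  rw [nbrAvg_eq_sum_div]
  simp only [h, sum_sub_distrib, sum_const, card_univ, Fintype.card_fin, nsmul_eq_mul,
    sum_ite_eq', mem_univ, if_true]
  field_simp
  ring

lemma sqNorm_le_gradBarrier {w : V d} (h0 : 0 ≤ (w j : ℝ)) (hS : w j ≤ S) :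
    sqNorm w ≤ gradBarrier j S w := by
  have : 0 ≤ w j * (S - w j) := mul_nonneg h0 (by linarith)
  exact le_add_of_nonneg_right (by positivity)

lemma sub_reflect_le_of_boundary (hab : ∀ y ∈ cube x (s + 1), u y ∈ Set.Icc a b)
    (hy : y ∈ cube x (s + 1)) (hj : x j ≤ y j) (hbdry : y ∈ cube x s → x j = y j) :
    u y - u (reflect j (2 * x j) y) ≤
      (b - a) / (s + 1 : ℕ) ^ 2 * gradBarrier j (s + 1 : ℕ) (y - x) := by
  have hab' : 0 ≤ b - a := sub_nonneg.2 ((hab y hy).1.trans (hab y hy).2)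
  have hle : sqNorm (y - x) ≤ gradBarrier j (s + 1 : ℕ) (y - x) := by
    have := (abs_le.1 (hy j)).2
    refine sqNorm_le_gradBarrier ?_ ?_
    · exact_mod_cast sub_nonneg.2 hj
    · exact_mod_cast this
  by_cases hys : y ∈ cube x s
  · rw [reflect_eq_self (by rw [hbdry hys]), sub_self]
    have := (sqNorm_nonneg _).trans hle
    positivity
  · obtain ⟨i, hi⟩ := notMem_cube.1 hys
    have hS : ((s + 1 : ℕ) : ℝ) ^ 2 ≤ gradBarrier j (s + 1 : ℕ) (y - x) :=
      (sq_le_sqNorm_sub (by exact_mod_cast hi)).trans hle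
    calc u y - u (reflect j (2 * x j) y) ≤ b - a :=
          sub_le_sub (hab y hy).2 (hab _ (reflect_mem_cube hy)).1
      _ = (b - a) / (s + 1 : ℕ) ^ 2 * (s + 1 : ℕ) ^ 2 := by field_simp
      _ ≤ _ := mul_le_mul_of_nonneg_left hS (by positivity)

/- Both sides are harmonic in `y` on the half cube `{y ∈ cube x s | x j < y j}`. -/
lemma IsHarmonicOn.sub_reflect_le [NeZero d] (hu : IsHarmonicOn u (cube x s))
    (hab : ∀ y ∈ cube x (s + 1), u y ∈ Set.Icc a b) (hy : y ∈ cube x (s + 1)) (hj : x j ≤ y j) :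
    u y - u (reflect j (2 * x j) y) ≤
      (b - a) / (s + 1 : ℕ) ^ 2 * gradBarrier j (s + 1 : ℕ) (y - x) := by
  set v : V d → ℝ := fun y ↦ (b - a) / (s + 1 : ℕ) ^ 2 * gradBarrier j (s + 1 : ℕ) (y - x)
  set U : Set (V d) := {y ∈ cube x s | x j < y j}
  by_cases hyU : y ∈ U
  · have hsub : IsSubharmonicOn (fun y ↦ u y - u (reflect j (2 * x j) y)) U := fun w hw ↦ by
      rw [nbrAvg_sub, nbrAvg_comp_reflect, hu w hw.1, hu _ (reflect_mem_cube hw.1)]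
    have hsup : IsSuperharmonicOn v U := fun w _ ↦ le_of_eq <| by
      simp only [v, sub_eq_add_neg]
      rw [nbrAvg_const_mul, nbrAvg_comp_add, nbrAvg_gradBarrier]
    refine hsub.le_of_isSuperharmonicOn ((finite_cube x s).subset fun w hw ↦ hw.1) hsup
      (fun w hw p hp ↦ ?_) y hyU
    have hwp : x j ≤ (w + step p) j := by
      have := (abs_le.1 (abs_step_apply_le p j)).1
      have := hw.2
      rw [Pi.add_apply]
      omega
    exact sub_reflect_le_of_boundary hab (add_step_mem_cube hw.1 p) hwp
      fun h ↦ (not_lt.1 fun hlt ↦ hp ⟨h, hlt⟩).antisymm' hwp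
  · exact sub_reflect_le_of_boundary hab hy hj
      fun h ↦ (not_lt.1 fun hlt ↦ hyU ⟨h, hlt⟩).antisymm' hj

lemma IsHarmonicOn.sub_le_of_mem_Icc_pos [NeZero d] (hu : IsHarmonicOn u (cube x s))
    (hab : ∀ y ∈ cube x (s + 1), u y ∈ Set.Icc a b) (j : Fin d) :
    u (x + step (j, 1)) - u (x - step (j, 1)) ≤ (b - a) * d / (s + 1) := by
  have hd : (1 : ℝ) ≤ d := by exact_mod_cast j.pos
  have hab' : 0 ≤ b - a := by
    have := hab x (self_mem_cube _ _)
    linarith [this.1, this.2]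
  have hrefl : reflect j (2 * x j) (x + step (j, 1)) = x - step (j, 1) := by
    simp [reflect_add_step, reflect_eq_self, reflectStep, step_neg, sub_eq_add_neg]
  have hbar : gradBarrier j (s + 1 : ℕ) (x + step (j, 1) - x) = 1 + d * s := by
    simp [gradBarrier, step_one, sqNorm_single]
  have hx : x + step (j, 1) ∈ cube x (s + 1) :=
    cube_subset_cube (by omega) (add_step_mem_cube (self_mem_cube x 0) (j, 1))
  calc u (x + step (j, 1)) - u (x - step (j, 1))
      ≤ (b - a) / (s + 1 : ℕ) ^ 2 * (1 + d * s) := by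
        have := hu.sub_reflect_le hab hx (j := j) (by simp [step_apply])
        rwa [hrefl, hbar] at this
    _ ≤ (b - a) / (s + 1 : ℕ) ^ 2 * (d * (s + 1)) := by
        gcongr
        linarith
    _ = (b - a) * d / (s + 1) := by
        push_cast
        field_simp

theorem IsHarmonicOn.sub_le_of_mem_Icc [NeZero d] (hu : IsHarmonicOn u (cube x s))
    (hab : ∀ y ∈ cube x (s + 1), u y ∈ Set.Icc a b) (p : Fin d × ℤˣ) :
    u (x + step p) - u (x - step p) ≤ (b - a) * d / (s + 1) := by
  obtain ⟨j, ε⟩ := p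
  rcases Int.units_eq_one_or ε with rfl | rfl
  · exact hu.sub_le_of_mem_Icc_pos hab j
  · have := (hu.const_mul (-1)).sub_le_of_mem_Icc_pos (a := -b) (b := -a)
      (fun y hy ↦ by simpa [and_comm] using hab y hy) j
    rw [step_neg, ← sub_eq_add_neg, sub_neg_eq_add]
    linear_combination this

end Gradient

section Paths

/-- The `ℓ¹` norm, i.e. the graph distance of `x` from the origin. -/
def l1Norm (x : V d) : ℕ := ∑ i, (x i).natAbs

variable {u : V d → ℝ} {x y : V d} {r s : ℕ}

lemma l1Norm_le_of_mem_cube (hx : x ∈ cube 0 r) : l1Norm x ≤ d * r := by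
  have h (i : Fin d) : (x i).natAbs ≤ r := by
    have := hx i
    rw [Pi.zero_apply, sub_zero, Int.abs_eq_natAbs] at this
    omega
  calc l1Norm x ≤ ∑ _i : Fin d, r := sum_le_sum fun i _ ↦ h i
    _ = d * r := by simp

lemma exists_l1Norm_sub_step (hx : x ≠ 0) :
    ∃ p, l1Norm (x - step p) + 1 = l1Norm x ∧ ∀ i, |(x - step p) i| ≤ |x i| := by
  obtain ⟨i, hi⟩ := Function.ne_iff.1 hx
  rw [Pi.zero_apply] at hi
  obtain ⟨ε, hε⟩ : ∃ ε : ℤˣ, (x i - ε).natAbs + 1 = (x i).natAbs := by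
    rcases hi.lt_or_gt with h | h
    · exact ⟨-1, by simp; omega⟩
    · exact ⟨1, by simp; omega⟩
  have hnat (j : Fin d) :
      (x j).natAbs = ((x - step (i, ε)) j).natAbs + if j = i then 1 else 0 := by
    rw [Pi.sub_apply, step_apply]
    by_cases hj : j = i
    · simp [hj, hε]
    · simp [hj]
  refine ⟨(i, ε), ?_, fun j ↦ ?_⟩
  · simp [l1Norm, hnat, sum_add_distrib]
  · have := hnat j
    rw [Int.abs_eq_natAbs, Int.abs_eq_natAbs]
    omega

lemma cube_induction {P : V d → Prop} (zero : P 0)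
    (step : ∀ x ∈ cube 0 r, ∀ p, x - step p ∈ cube 0 r → l1Norm (x - step p) + 1 = l1Norm x →
      P (x - step p) → P x) : ∀ x ∈ cube 0 r, P x := by
  suffices ∀ n, ∀ x ∈ cube 0 r, l1Norm x = n → P x from fun x hx ↦ this _ x hx rfl
  intro n
  induction n with
  | zero =>
    intro x _ h0
    have : x = 0 := by
      by_contra hne
      obtain ⟨p, hp, -⟩ := exists_l1Norm_sub_step hne
      omega
    exact this ▸ zero
  | succ n ih =>
    intro x hx hn
    have hne : x ≠ 0 := by
      rintro rfl
      simp [l1Norm] at hn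
    obtain ⟨p, hp, hle⟩ := exists_l1Norm_sub_step hne
    have hxp : x - USFPaper.step p ∈ cube 0 r := fun i ↦ by
      simpa using (hle i).trans (by simpa using hx i)
    exact step x hx p hxp hp (ih _ hxp (by omega))

lemma add_mem_cube (hx : x ∈ cube 0 r) : y + x ∈ cube y r := fun i ↦ by simpa using hx i

lemma IsSuperharmonicOn.le_pow_l1Norm_mul [NeZero d] (hu : IsSuperharmonicOn u (cube y r))
    (h0 : ∀ x, 0 ≤ u x) : ∀ x ∈ cube 0 r, u y ≤ (2 * d) ^ l1Norm x * u (y + x) := by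
  refine cube_induction (by simp [l1Norm]) fun x hx p _ hl ih ↦ ih.trans ?_
  have hstep : u (y + (x - step p)) ≤ 2 * d * u (y + x) := by
    have h := le_mul_nbrAvg h0 (y + x) (p.1, -p.2)
    rw [step_neg, ← sub_eq_add_neg, add_sub_assoc] at h
    exact h.trans (by gcongr; exact hu _ (add_mem_cube hx))
  calc (2 * d) ^ l1Norm (x - step p) * u (y + (x - step p))
      ≤ (2 * d) ^ l1Norm (x - step p) * (2 * d * u (y + x)) := by gcongr
    _ = (2 * d) ^ l1Norm x * u (y + x) := by
      rw [← hl]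
      ring

lemma IsHarmonicOn.sub_le_add_two_nsmul [NeZero d] {M : ℝ}
    (hu : IsHarmonicOn u (cube y (2 * r + s))) (h0 : ∀ x, 0 ≤ u x)
    (hM : ∀ x ∈ cube y (2 * r + s + 1), u x ≤ M) :
    ∀ x ∈ cube 0 r, u y - l1Norm x * (M * d / (s + 1)) ≤ u (y + 2 • x) := by
  refine cube_induction (by simp [l1Norm]) fun x hx p hxp hl ih ↦ ?_
  have hmid : y + 2 • x - step p ∈ cube y (2 * r) := fun i ↦ by
    have h₁ := abs_le.1 (hx i)
    have h₂ := abs_le.1 (hxp i)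
    simp only [Pi.sub_apply, Pi.zero_apply] at h₁ h₂
    simp only [Pi.sub_apply, Pi.add_apply, two_nsmul]
    rw [abs_le]
    push_cast
    omega
  have hIcc (z) (hz : z ∈ cube (y + 2 • x - step p) (s + 1)) : u z ∈ Set.Icc 0 M :=
    ⟨h0 z, hM z (cube_subset_cube_of_mem hmid (by omega) hz)⟩
  have hgrad := (hu.mono (cube_subset_cube_of_mem hmid le_rfl)).sub_le_of_mem_Icc hIcc (p.1, -p.2)
  have e₁ : y + 2 • x - step p + step (p.1, -p.2) = y + 2 • (x - step p) := by
    rw [step_neg, smul_sub, two_nsmul (step p)]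
    abel
  have e₂ : y + 2 • x - step p - step (p.1, -p.2) = y + 2 • x := by
    rw [step_neg]
    abel
  rw [e₁, e₂, sub_zero] at hgrad
  rw [← hl]
  push_cast
  linarith

end Paths

section Growth

lemma two_add_le_pow_add_pow (t : ℝ) (k : ℕ) :
    2 + k * (k - 1) * t ^ 2 ≤ (1 + t) ^ k + (1 - t) ^ k ∧
      2 * k * t ^ 2 ≤ t * ((1 + t) ^ k - (1 - t) ^ k) := by
  induction k with
  | zero => norm_num
  | succ k ih =>
    have hsum : 2 ≤ (1 + t) ^ k + (1 - t) ^ k := by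
      rcases k.eq_zero_or_pos with rfl | hk
      · norm_num
      · have : (0 : ℝ) ≤ k - 1 := sub_nonneg.2 (by exact_mod_cast hk)
        have : 0 ≤ (k : ℝ) * (k - 1) * t ^ 2 := by positivity
        linarith [ih.1]
    have := mul_le_mul_of_nonneg_left hsum (sq_nonneg t)
    constructor
    · push_cast
      linear_combination ih.1 + ih.2
    · push_cast
      linear_combination ih.2 + this

lemma two_add_le_inv_pow_add_inv_pow {t : ℝ} (ht : |t| < 1) (k : ℕ) :
    2 + k * (k + 1) * t ^ 2 ≤ ((1 + t)⁻¹) ^ k + ((1 - t)⁻¹) ^ k := by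
  obtain ⟨h₁, h₂⟩ := abs_lt.1 ht
  have hpos : 0 < 1 + t := by linarith
  have : 0 < 1 - t := by linarith
  have hbern : 1 + k * t ^ 2 ≤ (((1 + t) * (1 - t))⁻¹) ^ k := by
    refine (one_add_mul_le_pow (by nlinarith) k).trans (pow_le_pow_left₀ (by positivity) ?_ k)
    rw [← one_div, le_div_iff₀ (by positivity)]
    nlinarith [sq_nonneg (t ^ 2)]
  have hk : (0 : ℝ) ≤ k * (k - 1) := by
    rcases k.eq_zero_or_pos with rfl | hk
    · simp
    · have : (0 : ℝ) ≤ k - 1 := sub_nonneg.2 (by exact_mod_cast hk)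
      positivity
  calc 2 + k * (k + 1) * t ^ 2 ≤ (1 + k * t ^ 2) * (2 + k * (k - 1) * t ^ 2) := by
        have : 0 ≤ k * t ^ 2 * (k * (k - 1) * t ^ 2) := by positivity
        linear_combination this
    _ ≤ (((1 + t) * (1 - t))⁻¹) ^ k * ((1 + t) ^ k + (1 - t) ^ k) := by
        exact mul_le_mul hbern (two_add_le_pow_add_pow t k).1 (by positivity) (by positivity)
    _ = ((1 + t)⁻¹) ^ k + ((1 - t)⁻¹) ^ k := by
        rw [inv_pow, inv_pow, inv_pow, mul_pow]
        field_simp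
        ring

lemma inv_pow_le_inv_add_one_pow_mul {s : ℝ} {k : ℕ} (hk : k ≠ 0) (hs : 4 * k ≤ s) :
    (s⁻¹) ^ k ≤ ((s + 1)⁻¹) ^ k * (1 + 2 * (k + 1) * s / (s + 1) ^ 2) := by
  have hk' : (0 : ℝ) < k := by positivity
  have hpos : 0 < s := by linarith
  have hbern : (s + 1 - k) / (s + 1) ≤ (s / (s + 1)) ^ k := by
    have := one_add_mul_le_pow (a := -(s + 1)⁻¹)
      (by have := inv_le_one_of_one_le₀ (by linarith : 1 ≤ s + 1); linarith) k
    have e₁ : (s + 1 - k) / (s + 1) = 1 + k * -(s + 1)⁻¹ := by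
      field_simp
      ring
    have e₂ : s / (s + 1) = 1 + -(s + 1)⁻¹ := by
      field_simp
      ring
    rwa [e₁, e₂]
  have hfactor : 1 ≤ (s / (s + 1)) ^ k * (1 + 2 * (k + 1) * s / (s + 1) ^ 2) := by
    refine le_trans ?_ (mul_le_mul_of_nonneg_right hbern (by positivity))
    obtain ⟨w, hw, rfl⟩ : ∃ w, 0 ≤ w ∧ s = 4 * k + w := ⟨s - 4 * k, by linarith, by ring⟩
    have : 0 ≤ 8 * (k : ℝ) ^ 3 + 24 * k ^ 2 + 7 * k + (6 * k ^ 2 + 14 * k + 2) * w +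
        (k + 2) * w ^ 2 := by positivity
    rw [div_mul_eq_mul_div, one_le_div (by positivity)]
    field_simp
    linear_combination this
  calc (s⁻¹) ^ k ≤ (s⁻¹) ^ k * ((s / (s + 1)) ^ k * (1 + 2 * (k + 1) * s / (s + 1) ^ 2)) :=
        le_mul_of_one_le_right (by positivity) hfactor
    _ = ((s + 1)⁻¹) ^ k * (1 + 2 * (k + 1) * s / (s + 1) ^ 2) := by
        rw [← mul_assoc, ← mul_pow]
        congr 2
        field_simp

variable {u : V d → ℝ} {x y : V d} {R σ : ℕ} {l : ℝ}

lemma inv_sqNorm_pow_le_nbrAvg [NeZero d] (hx : 4 * d ≤ sqNorm x) :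
    ((sqNorm x)⁻¹) ^ d ≤ nbrAvg (fun y ↦ ((sqNorm y)⁻¹) ^ d) x := by
  have hd : (0 : ℝ) < d := by exact_mod_cast NeZero.pos d
  have hd1 : (1 : ℝ) ≤ d := by exact_mod_cast NeZero.pos d
  set v := sqNorm x + 1 with hv
  have hvpos : 0 < v := by linarith
  have hterm (i : Fin d) : (v⁻¹) ^ d * (2 + d * (d + 1) * (2 * x i / v) ^ 2) ≤
      ((sqNorm (x + Pi.single i 1))⁻¹) ^ d + ((sqNorm (x + Pi.single i (-1)))⁻¹) ^ d := by
    have ht : |2 * x i / v| < 1 := by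
      rw [abs_div, abs_of_pos hvpos, div_lt_one hvpos]
      refine abs_lt_of_sq_lt_sq ?_ hvpos.le
      nlinarith [sq_apply_le_sqNorm x i]
    have e₁ : sqNorm (x + Pi.single i 1) = v * (1 + 2 * x i / v) := by
      rw [sqNorm_add_single]
      field_simp
      push_cast
      linear_combination -hv
    have e₂ : sqNorm (x + Pi.single i (-1)) = v * (1 - 2 * x i / v) := by
      rw [sqNorm_add_single]
      field_simp
      push_cast
      linear_combination -hv
    rw [e₁, e₂, mul_inv, mul_inv, mul_pow, mul_pow, ← mul_add]
    exact mul_le_mul_of_nonneg_left (two_add_le_inv_pow_add_inv_pow ht d) (by positivity)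
  calc ((sqNorm x)⁻¹) ^ d ≤ (v⁻¹) ^ d * (1 + 2 * (d + 1) * sqNorm x / v ^ 2) :=
        inv_pow_le_inv_add_one_pow_mul (NeZero.ne d) hx
    _ = (∑ i, (v⁻¹) ^ d * (2 + d * (d + 1) * (2 * x i / v) ^ 2)) / (2 * d) := by
        simp only [← mul_sum, sum_add_distrib, div_pow, mul_pow, ← sum_div, sum_const, card_univ,
          Fintype.card_fin, nsmul_eq_mul]
        rw [← sqNorm]
        field_simp
    _ ≤ nbrAvg (fun y ↦ ((sqNorm y)⁻¹) ^ d) x := by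
        rw [nbrAvg_eq_sum_div]
        gcongr with i
        exact hterm i

lemma inv_sqNorm_sub_pow_le {n : ℕ} {i : Fin d} (hn : 0 < n) (h : (n : ℤ) ≤ |y i - x i|) :
    ((sqNorm (y - x))⁻¹) ^ d ≤ (((n : ℝ) ^ 2)⁻¹) ^ d :=
  pow_le_pow_left₀ (inv_nonneg.2 (sqNorm_nonneg _))
    (inv_anti₀ (by positivity) (sq_le_sqNorm_sub h)) d

lemma isSubharmonicOn_inv_sqNorm_sub_pow [NeZero d] (y : V d) (hσ : 2 * d ≤ σ) :
    IsSubharmonicOn (fun x ↦ ((sqNorm (x - y))⁻¹) ^ d) (cube y σ)ᶜ := fun x hx ↦ by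
  have hσ' : (2 * d : ℝ) ≤ σ := by exact_mod_cast hσ
  have hd : (1 : ℝ) ≤ d := by exact_mod_cast NeZero.pos d
  obtain ⟨i, hi⟩ := notMem_cube.1 hx
  have := sq_le_sqNorm_sub hi.le
  simp only [sub_eq_add_neg x, sub_eq_add_neg _ y,
    nbrAvg_comp_add (fun w ↦ ((sqNorm w)⁻¹) ^ d)]
  exact inv_sqNorm_pow_le_nbrAvg (by rw [← sub_eq_add_neg]; nlinarith)

/- The left-hand side is subharmonic on the annulus `cube y R \ cube y σ`, at most `l` next to its
inner boundary and nonpositive outside `cube y R`. -/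
lemma IsSuperharmonicOn.le_of_le_on_cube [NeZero d] (hu : IsSuperharmonicOn u (cube y R))
    (h0 : ∀ x, 0 ≤ u x) (hσ : 2 * d ≤ σ) (hl : 0 ≤ l) (hlow : ∀ x ∈ cube y σ, l ≤ u x)
    (hx : x ∈ cube y R) (hxσ : x ∉ cube y σ) :
    l * ((σ : ℝ) ^ 2) ^ d * (((sqNorm (x - y))⁻¹) ^ d - ((((R + 1 : ℕ) : ℝ) ^ 2)⁻¹) ^ d) ≤ u x := by
  set ψ : V d → ℝ := fun w ↦ ((sqNorm w)⁻¹) ^ d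
  set ρ : ℝ := ((((R + 1 : ℕ) : ℝ) ^ 2)⁻¹) ^ d
  have hd := NeZero.pos d
  have hσ1 : 0 < σ := by omega
  have hsub : IsSubharmonicOn (fun w ↦ l * ((σ : ℝ) ^ 2) ^ d * (ψ (w - y) - ρ))
      (cube y R \ cube y σ) := fun w hw ↦ by
    rw [nbrAvg_const_mul, nbrAvg_sub, nbrAvg_const]
    exact mul_le_mul_of_nonneg_left
      (sub_le_sub_right (isSubharmonicOn_inv_sqNorm_sub_pow y hσ w hw.2) _) (by positivity)
  refine hsub.le_of_isSuperharmonicOn ((finite_cube y R).sdiff) (fun w hw ↦ hu w hw.1)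
    (fun w hw p hp ↦ ?_) x ⟨hx, hxσ⟩
  by_cases hpσ : w + step p ∈ cube y σ
  · obtain ⟨i, hi⟩ := notMem_cube.1 hw.2
    have hiσ : (σ : ℤ) ≤ |(w + step p) i - y i| := by
      have := abs_sub_le (w i) ((w + step p) i) (y i)
      have := abs_step_apply_le p i
      rw [Pi.add_apply, sub_add_cancel_left, abs_neg] at *
      omega
    have hψ : ψ (w + step p - y) ≤ _ := inv_sqNorm_sub_pow_le hσ1 hiσ
    calc l * ((σ : ℝ) ^ 2) ^ d * (ψ (w + step p - y) - ρ)
        ≤ l * ((σ : ℝ) ^ 2) ^ d * (((σ : ℝ) ^ 2)⁻¹) ^ d := by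
          gcongr
          exact (sub_le_self _ (by positivity)).trans hψ
      _ = l := by rw [mul_assoc, ← mul_pow, mul_inv_cancel₀ (by positivity), one_pow, mul_one]
      _ ≤ u (w + step p) := hlow _ hpσ
  · obtain ⟨i, hi⟩ := notMem_cube.1 fun hR ↦ hp ⟨hR, hpσ⟩
    have hψ : ψ (w + step p - y) ≤ ρ := inv_sqNorm_sub_pow_le (by omega) (by exact_mod_cast hi)
    refine le_trans ?_ (h0 _)
    exact mul_nonpos_of_nonneg_of_nonpos (by positivity) (sub_nonpos.2 hψ)

end Growth

section Harnack

variable {u : V d → ℝ} {x y z : V d} {r ρ δ : ℕ}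

/-- The `ℓ^∞` distance, as a natural number: `supDist x y ≤ r` is membership in a cube. -/
def supDist (x y : V d) : ℕ := univ.sup fun i ↦ (x i - y i).natAbs

lemma supDist_le_iff : supDist x y ≤ r ↔ x ∈ cube y r := by
  simp only [supDist, Finset.sup_le_iff, mem_univ, true_imp_iff, mem_cube, Int.abs_eq_natAbs,
    Nat.cast_le]

lemma exists_two_nsmul_approx {a : ℕ} (ha : 1 ≤ a) (hx : x ∈ cube y (2 * ρ + a)) :
    ∃ κ ∈ cube 0 ρ, x ∈ cube (y + 2 • κ) a := by
  have hcoord (i : Fin d) : ∃ k : ℤ, |k| ≤ ρ ∧ |x i - (y i + 2 * k)| ≤ a := by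
    have := abs_le.1 (hx i)
    push_cast at this
    simp only [abs_le]
    by_cases h₁ : 2 * ρ < x i - y i
    · exact ⟨ρ, by omega, by omega⟩
    by_cases h₂ : x i - y i < -(2 * ρ)
    · exact ⟨-ρ, by omega, by omega⟩
    exact ⟨(x i - y i) / 2, by omega, by omega⟩
  choose κ hκ using hcoord
  exact ⟨κ, fun i ↦ by simpa using (hκ i).1, fun i ↦ by simpa using (hκ i).2⟩

lemma IsHarmonicOn.le_two_mul_add_two_nsmul [NeZero d] {M : ℝ} (hu : IsHarmonicOn u (cube y δ))
    (h0 : ∀ x, 0 ≤ u x) (hM1 : 1 ≤ M) (hM : ∀ x ∈ cube y (δ / 2), u x ≤ M * u y)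
    (hρ : 16 * d ^ 2 * M * ρ ≤ δ) (hx : x ∈ cube 0 ρ) : u y ≤ 2 * u (y + 2 • x) := by
  rcases ρ.eq_zero_or_pos with rfl | hρ0
  · obtain rfl : x = 0 := funext fun i ↦ abs_nonpos_iff.1 (by simpa using hx i)
    simpa using by linarith [h0 y]
  have hd : (1 : ℝ) ≤ d := by exact_mod_cast NeZero.pos d
  have hρδ : 16 * ρ ≤ δ := by
    have : (16 * ρ : ℝ) ≤ δ := by
      refine le_trans ?_ hρ
      gcongr
      have : (1 : ℝ) ≤ d ^ 2 * M := one_le_mul_of_one_le_of_one_le (one_le_pow₀ hd) hM1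
      linarith
    exact_mod_cast this
  have hchain := (hu.mono (cube_subset_cube (by omega))).sub_le_add_two_nsmul (r := ρ) (s := δ / 4)
    h0 (fun w hw ↦ hM w (cube_subset_cube (by omega) hw)) x hx
  have hs : (δ : ℝ) ≤ 4 * ((δ / 4 : ℕ) + 1) := by exact_mod_cast (by omega : δ ≤ 4 * (δ / 4 + 1))
  have hl : (l1Norm x : ℝ) ≤ d * ρ := by exact_mod_cast l1Norm_le_of_mem_cube hx
  have hloss : (l1Norm x : ℝ) * (M * u y * d / ((δ / 4 : ℕ) + 1)) ≤ u y / 4 := by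
    have := h0 y
    rw [← mul_div_assoc, div_le_iff₀ (by positivity)]
    calc (l1Norm x : ℝ) * (M * u y * d) ≤ d * ρ * (M * u y * d) := by gcongr
      _ = 16 * d ^ 2 * M * ρ * (u y / 16) := by ring
      _ ≤ 4 * ((δ / 4 : ℕ) + 1) * (u y / 16) :=
        mul_le_mul_of_nonneg_right (hρ.trans hs) (by positivity)
      _ = u y / 4 * ((δ / 4 : ℕ) + 1) := by ring
  linarith [h0 y]

lemma IsHarmonicOn.exists_le_mul_of_le_mul (d : ℕ) [NeZero d] {M : ℕ} (hM1 : 1 ≤ M) :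
    ∃ (q : ℕ) (B : ℝ), 1 ≤ q ∧ 1 ≤ B ∧ ∀ (u : V d → ℝ) (y : V d) (δ : ℕ),
      IsHarmonicOn u (cube y (δ + 2 * d)) → (∀ x, 0 ≤ u x) →
      (∀ x ∈ cube y (δ / 2), u x ≤ M * u y) →
      ∀ x ∈ cube y (2 * (δ / q) + 2 * d), u y ≤ B * u x := by
  have hd := NeZero.pos d
  have hd' : (1 : ℝ) ≤ d := by exact_mod_cast hd
  have hpow : (1 : ℝ) ≤ (2 * d) ^ (d * (2 * d)) := one_le_pow₀ (by linarith)
  refine ⟨16 * d ^ 2 * M, 2 * (2 * d) ^ (d * (2 * d)), Nat.one_le_iff_ne_zero.2 (by positivity),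
    by linarith, fun u y δ hu h0 hM x hx ↦ ?_⟩
  set ρ := δ / (16 * d ^ 2 * M)
  have hρ : 16 * d ^ 2 * M * ρ ≤ δ := Nat.mul_div_le _ _
  have hρδ : 2 * ρ ≤ δ := by
    refine le_trans (Nat.mul_le_mul_right ρ ?_) hρ
    have : 1 ≤ d ^ 2 * M := Nat.one_le_iff_ne_zero.2 (by positivity)
    linarith
  obtain ⟨κ, hκ, hxκ⟩ := exists_two_nsmul_approx (by omega) hx
  have hyκ : y + 2 • κ ∈ cube y (2 * ρ) := fun i ↦ by
    have := abs_le.1 (hκ i)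
    simp only [Pi.zero_apply, sub_zero] at this
    rw [Pi.add_apply, Pi.smul_apply, add_sub_cancel_left, nsmul_eq_mul, abs_le]
    push_cast
    omega
  have hdiff : x - (y + 2 • κ) ∈ cube 0 (2 * d) := fun i ↦ by simpa using hxκ i
  have hhalf := (hu.mono (cube_subset_cube (by omega))).le_two_mul_add_two_nsmul h0
    (by exact_mod_cast hM1) hM (by exact_mod_cast hρ) hκ
  have hend := (hu.mono
    (cube_subset_cube_of_mem hyκ (by omega))).isSuperharmonicOn.le_pow_l1Norm_mul h0 _ hdiff
  rw [add_sub_cancel] at hend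
  calc u y ≤ 2 * u (y + 2 • κ) := hhalf
    _ ≤ 2 * ((2 * d) ^ l1Norm (x - (y + 2 • κ)) * u x) := by gcongr
    _ ≤ 2 * ((2 * d) ^ (d * (2 * d)) * u x) := by
      have := h0 x
      gcongr
      · linarith
      · exact l1Norm_le_of_mem_cube hdiff
    _ = 2 * (2 * d) ^ (d * (2 * d)) * u x := by ring

/- `y` maximizes `x ↦ u x * (2 * r + 1 - supDist x z) ^ k`, and `δ` is its weight. -/
lemma exists_weighted_max (h0 : ∀ x, 0 ≤ u x) (z : V d) (r k : ℕ) :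
    ∃ y ∈ cube z (2 * r), ∃ δ ≤ 2 * r + 1, (∀ x ∈ cube y (δ / 2), u x ≤ 2 ^ k * u y) ∧
      ∀ x ∈ cube z r, u x * (r : ℝ) ^ k ≤ u y * (δ : ℝ) ^ k := by
  set ω : V d → ℕ := fun x ↦ 2 * r + 1 - supDist x z
  have hω (x) : ω x = 2 * r + 1 - supDist x z := rfl
  obtain ⟨y, hy, hmax⟩ := Set.exists_max_image (cube z (2 * r)) (fun x ↦ u x * (ω x : ℝ) ^ k)
    (finite_cube _ _) ⟨z, self_mem_cube _ _⟩
  have hyz := supDist_le_iff.2 hy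
  refine ⟨y, hy, ω y, Nat.sub_le _ _, fun x hx ↦ ?_, fun x hx ↦ ?_⟩
  · have hxz := supDist_le_iff.2 (mem_cube_add (supDist_le_iff.1 le_rfl : y ∈ cube z _) hx)
    rw [hω y] at hxz
    have hωxy : ω y ≤ 2 * ω x := by grind
    have hωx : 0 < ω x := by grind
    have hxy : (ω y : ℝ) ≤ 2 * ω x := by exact_mod_cast hωxy
    have hpos : (0 : ℝ) < ω x := by exact_mod_cast hωx
    refine le_of_mul_le_mul_right ?_ (pow_pos hpos k)
    calc u x * (ω x : ℝ) ^ k ≤ u y * (ω y : ℝ) ^ k := hmax x (supDist_le_iff.1 (by omega))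
      _ ≤ u y * (2 * ω x) ^ k := by
        have := h0 y
        gcongr
      _ = 2 ^ k * u y * (ω x : ℝ) ^ k := by ring
  · have hxz := supDist_le_iff.2 hx
    refine le_trans ?_ (hmax x (cube_subset_cube (by omega) hx))
    have := h0 x
    gcongr
    rw [hω]
    omega

lemma IsSuperharmonicOn.mul_pow_le_of_le_on_cube [NeZero d] {l : ℝ} {σ : ℕ}
    (hu : IsSuperharmonicOn u (cube y (4 * d * r))) (h0 : ∀ x, 0 ≤ u x) (hr : 1 ≤ r)
    (hσ : 2 * d ≤ σ) (hl : 0 ≤ l) (hlow : ∀ x ∈ cube y σ, l ≤ u x) (hx : x ∈ cube y (2 * r))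
    (hxσ : x ∉ cube y σ) : l * ((σ : ℝ) ^ 2) ^ d ≤ 2 * (4 * d * r ^ 2) ^ d * u x := by
  have hd : (1 : ℝ) ≤ d := by exact_mod_cast NeZero.pos d
  have hr' : (1 : ℝ) ≤ r := by exact_mod_cast hr
  have hgrow := hu.le_of_le_on_cube h0 hσ hl hlow
    (cube_subset_cube (by nlinarith [NeZero.pos d]) hx) hxσ
  set a : ℝ := (4 * d * r ^ 2)⁻¹
  have hnear : a ^ d ≤ ((sqNorm (x - y))⁻¹) ^ d := by
    obtain ⟨i, hi⟩ := notMem_cube.1 hxσ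
    have hpos : 0 < sqNorm (x - y) :=
      (by positivity : (0 : ℝ) < ((σ + 1 : ℕ) : ℝ) ^ 2).trans_le
        (sq_le_sqNorm_sub (by exact_mod_cast hi))
    refine pow_le_pow_left₀ (by positivity) (inv_anti₀ hpos ?_) d
    refine (sqNorm_sub_le_of_mem_cube hx).trans_eq ?_
    push_cast
    ring
  have hfar : ((((4 * d * r + 1 : ℕ) : ℝ) ^ 2)⁻¹) ^ d ≤ a ^ d / 2 := by
    have hsq : 2 * (4 * d * r ^ 2) ≤ ((4 * d * r + 1 : ℕ) : ℝ) ^ 2 := by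
      push_cast
      nlinarith [mul_nonneg (sub_nonneg.2 hd) (sq_nonneg (r : ℝ))]
    calc ((((4 * d * r + 1 : ℕ) : ℝ) ^ 2)⁻¹) ^ d ≤ ((2 * (4 * d * r ^ 2) : ℝ)⁻¹) ^ d := by gcongr
      _ = a ^ d * (2⁻¹ : ℝ) ^ d := by rw [mul_inv, mul_comm, mul_pow]
      _ ≤ a ^ d * 2⁻¹ := by
        gcongr
        exact pow_le_of_le_one (by norm_num) (by norm_num) (NeZero.ne d)
      _ = a ^ d / 2 := by ring
  calc l * ((σ : ℝ) ^ 2) ^ d = 2 * (4 * d * r ^ 2) ^ d * (l * ((σ : ℝ) ^ 2) ^ d * (a ^ d / 2)) := by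
        have : a ^ d * (4 * d * r ^ 2 : ℝ) ^ d = 1 := by
          rw [← mul_pow, inv_mul_cancel₀ (by positivity), one_pow]
        linear_combination -(l * ((σ : ℝ) ^ 2) ^ d) * this
    _ ≤ 2 * (4 * d * r ^ 2) ^ d * u x := by
        gcongr
        refine le_trans ?_ hgrow
        gcongr
        linarith

lemma IsSuperharmonicOn.mul_pow_le_of_le_mul_on_cube [NeZero d] {B : ℝ} {q σ : ℕ}
    (hu : IsSuperharmonicOn u (cube y (4 * d * r))) (h0 : ∀ x, 0 ≤ u x) (hr : 1 ≤ r)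
    (hσ : 2 * d ≤ σ) (hδ : δ ≤ q * σ) (hB : 0 < B) (hlow : ∀ x ∈ cube y σ, u y ≤ B * u x)
    (hx : x ∈ cube y (2 * r)) (hxσ : x ∉ cube y σ) :
    u y * (δ : ℝ) ^ (2 * d) ≤ 2 * B * (4 * d * q ^ 2) ^ d * u x * r ^ (2 * d) := by
  have huy := h0 y
  have hδ' : (δ : ℝ) ≤ q * σ := by exact_mod_cast hδ
  have hlow' (w) (hw : w ∈ cube y σ) : u y / B ≤ u w := by
    rw [div_le_iff₀ hB, mul_comm]
    exact hlow w hw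
  have hgrow := hu.mul_pow_le_of_le_on_cube h0 hr hσ (by positivity) hlow' hx hxσ
  rw [div_mul_eq_mul_div, div_le_iff₀ hB] at hgrow
  calc u y * (δ : ℝ) ^ (2 * d) ≤ u y * (q * σ) ^ (2 * d) := by gcongr
    _ = (q ^ 2) ^ d * (u y * ((σ : ℝ) ^ 2) ^ d) := by ring
    _ ≤ (q ^ 2) ^ d * (2 * (4 * d * r ^ 2) ^ d * u x * B) := by gcongr
    _ = 2 * B * (4 * d * q ^ 2) ^ d * u x * r ^ (2 * d) := by ring

theorem exists_harnack (d : ℕ) [NeZero d] : ∃ (C : ℝ) (A : ℕ), 1 ≤ C ∧ 1 ≤ A ∧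
    ∀ (u : V d → ℝ) (z : V d) (r : ℕ), 1 ≤ r → (∀ x, 0 ≤ u x) →
      IsHarmonicOn u (cube z (A * r)) → ∀ y ∈ cube z r, u y ≤ C * u z := by
  obtain ⟨q, B, hq, hB, hloc⟩ :=
    IsHarmonicOn.exists_le_mul_of_le_mul d (Nat.one_le_two_pow (n := 2 * d))
  have hd : (1 : ℝ) ≤ d := by exact_mod_cast NeZero.pos d
  have hq' : (1 : ℝ) ≤ q := by exact_mod_cast hq
  set G : ℝ := 9 * d * q ^ 2
  have hG : 9 ≤ G := by nlinarith [one_le_mul_of_one_le_of_one_le hd (one_le_pow₀ hq' (n := 2))]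
  have hGd : 1 ≤ G ^ d := one_le_pow₀ (by linarith)
  refine ⟨2 * B * G ^ d, 5 + 4 * d, by nlinarith, by omega, fun u z r hr h0 hu x hx ↦ ?_⟩
  have : (1 : ℝ) ≤ r := by exact_mod_cast hr
  obtain ⟨y, hy, δ, hδr, hhalf, hmax⟩ := exists_weighted_max h0 z r (2 * d)
  have hδ3 : (δ : ℝ) ≤ 3 * r := by exact_mod_cast (by omega : δ ≤ 3 * r)
  have hyz := hloc u y δ (hu.mono (cube_subset_cube_of_mem hy (by nlinarith))) h0
    (by exact_mod_cast hhalf)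
  set σ := 2 * (δ / q) + 2 * d
  have huz := h0 z
  suffices u y * (δ : ℝ) ^ (2 * d) ≤ 2 * B * G ^ d * u z * r ^ (2 * d) from
    le_of_mul_le_mul_right ((hmax x hx).trans this) (by positivity)
  by_cases hz : z ∈ cube y σ
  · calc u y * (δ : ℝ) ^ (2 * d) ≤ B * u z * (3 * r) ^ (2 * d) := by
          gcongr
          exact hyz z hz
      _ = B * u z * 9 ^ d * r ^ (2 * d) := by rw [mul_pow, pow_mul 3]; norm_num; ring
      _ ≤ 2 * (B * u z * G ^ d * r ^ (2 * d)) := by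
          refine le_trans ?_ (le_mul_of_one_le_left (by positivity) one_le_two)
          gcongr
      _ = 2 * B * G ^ d * u z * r ^ (2 * d) := by ring
  · have hδq : δ ≤ q * σ := (Nat.lt_mul_div_succ δ hq).le.trans
      (Nat.mul_le_mul_left q (by have := NeZero.pos d; omega))
    have hu' : IsSuperharmonicOn u (cube y (4 * d * r)) :=
      (hu.mono (cube_subset_cube_of_mem hy (by nlinarith))).isSuperharmonicOn
    refine (hu'.mul_pow_le_of_le_mul_on_cube h0 hr (by omega) hδq (by positivity) hyz
      (mem_cube_comm.1 hy) hz).trans ?_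
    gcongr
    simp only [G]
    gcongr
    norm_num

lemma exists_harnack_axis (d : ℕ) [NeZero d] : ∃ (C : ℝ) (A : ℕ), 1 ≤ C ∧ 1 ≤ A ∧
    ∀ (u : V d → ℝ) (z : V d) (R t : ℕ) (i : Fin d), (∀ x, 0 ≤ u x) →
      IsHarmonicOn u (cube z R) → A * (t - 1) ≤ R → u (z + Pi.single i (t : ℤ)) ≤ C * u z := by
  obtain ⟨C, A, hC, hA, hharnack⟩ := exists_harnack d
  have hd : (1 : ℝ) ≤ d := by exact_mod_cast NeZero.pos d
  refine ⟨C * (2 * d), 2 * A, by nlinarith, by omega, fun u z R t i h0 hu hR ↦ ?_⟩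
  have huz := h0 z
  match t, hR with
  | 0, _ =>
    simpa using le_mul_of_one_le_left huz (one_le_mul_of_one_le_of_one_le hC (by linarith))
  | 1, _ =>
    calc u (z + Pi.single i ((1 : ℕ) : ℤ)) ≤ 2 * d * nbrAvg u z := by
          simpa [step_one] using le_mul_nbrAvg h0 z (i, 1)
      _ = 1 * (2 * d) * u z := by rw [hu z (self_mem_cube _ _), one_mul]
      _ ≤ C * (2 * d) * u z := by gcongr
  | t + 2, hR =>
    calc u (z + Pi.single i ((t + 2 : ℕ) : ℤ)) ≤ C * u z := by
          refine hharnack u z (t + 2) (by omega) h0 (hu.mono (cube_subset_cube ?_)) _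
            (add_single_mem_cube z i (t + 2))
          refine le_trans ?_ hR
          rw [mul_comm 2, mul_assoc]
          exact Nat.mul_le_mul_left A (by omega)
      _ = C * 1 * u z := by ring
      _ ≤ C * (2 * d) * u z := by
          gcongr
          linarith

end Harnack

section Potential

/-- The profile of the superharmonic function `potential ∘ sqNorm` on `ℤ^d`, `d ≥ 3`, of order
`|x|^(-2/3)`. The shift `1600` makes the increments of `sqNorm x + 1600` along a step relatively
small, so that a second-order Taylor estimate of the cube root applies everywhere. -/
noncomputable def potential (s : ℝ) : ℝ := (s + 1600) ^ (-(3 : ℝ)⁻¹)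

variable {a b c q s t : ℝ}

lemma potential_pos (hs : 0 ≤ s) : 0 < potential s := Real.rpow_pos_of_pos (by linarith) _

lemma potential_pow_three_mul (hs : 0 ≤ s) : potential s ^ 3 * (s + 1600) = 1 := by
  have hpos : 0 < s + 1600 := by linarith
  rw [potential, ← Real.rpow_natCast, ← Real.rpow_mul hpos.le]
  norm_num
  rw [Real.rpow_neg_one, inv_mul_cancel₀ hpos.ne']

lemma le_potential_iff (hs : 0 ≤ s) (hq : 0 ≤ q) :
    q ≤ potential s ↔ q ^ 3 * (s + 1600) ≤ 1 := by
  rw [← potential_pow_three_mul hs, mul_le_mul_iff_left₀ (by linarith),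
    pow_le_pow_iff_left₀ hq (potential_pos hs).le three_ne_zero]

lemma potential_le_iff (hs : 0 ≤ s) (hq : 0 ≤ q) :
    potential s ≤ q ↔ 1 ≤ q ^ 3 * (s + 1600) := by
  rw [← potential_pow_three_mul hs, mul_le_mul_iff_left₀ (by linarith),
    pow_le_pow_iff_left₀ (potential_pos hs).le hq three_ne_zero]

lemma mul_potential_le_potential (hs : 0 ≤ s) (ht : 0 ≤ t) (hc : 0 ≤ c)
    (h : c ^ 3 * (s + 1600) ≤ t + 1600) : c * potential t ≤ potential s := by
  have hpos := potential_pos ht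
  rw [le_potential_iff hs (by positivity), ← potential_pow_three_mul ht, mul_pow, mul_comm (c ^ 3),
    mul_assoc]
  gcongr

lemma potential_anti (hs : 0 ≤ s) (h : s ≤ t) : potential t ≤ potential s := by
  simpa using mul_potential_le_potential hs (hs.trans h) zero_le_one (by linarith)

lemma potential_lt_potential (hs : 0 ≤ s) (h : s < t) : potential t < potential s :=
  Real.rpow_lt_rpow_of_neg (by linarith) (by linarith) (by norm_num)

lemma potential_mul_mul_potential_le (ha : 0 ≤ a) (hab : a ≤ b) (ht : 1 ≤ t) :
    potential (b * t) * potential a ≤ potential b * potential (a * t) := by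
  have hb : 0 ≤ b := ha.trans hab
  have hpb := potential_pos hb
  have hpa := potential_pos ha
  have hratio : (potential a / potential b) ^ 3 = (b + 1600) / (a + 1600) := by
    rw [div_pow, div_eq_div_iff (by positivity) (by positivity), potential_pow_three_mul ha,
      mul_comm, potential_pow_three_mul hb]
  have := mul_potential_le_potential (s := a * t) (t := b * t) (c := potential a / potential b)
    (by positivity) (by positivity) (by positivity) (by
      rw [hratio, div_mul_eq_mul_div, div_le_iff₀ (by positivity)]
      nlinarith [mul_nonneg (sub_nonneg.2 hab) (sub_nonneg.2 ht)])
  rw [div_mul_eq_mul_div, div_le_iff₀ hpb] at this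
  linarith

lemma one_le_taylor_pow_three_mul (ht : |t| ≤ 1 / 20) :
    1 ≤ (1 - t / 3 + t ^ 2 / 4) ^ 3 * (1 + t) := by
  obtain ⟨h₁, h₂⟩ := abs_le.1 ht
  have hsq : t ^ 2 ≤ 1 / 400 := by nlinarith
  have hsq0 : 0 ≤ t ^ 2 := sq_nonneg t
  have h3 : -(1 / 400) ≤ t ^ 3 := by nlinarith
  have h4 : t ^ 4 ≤ 1 / 400 := by nlinarith
  have h5 : -(1 / 400) ≤ t ^ 5 := by nlinarith [sq_nonneg (t ^ 2)]
  have hrem : 0 ≤ t ^ 2 * (1 / 12 + t * (59 / 108) - t ^ 2 * (115 / 432) + t ^ 3 * (5 / 24) -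
      t ^ 4 * (3 / 64) + t ^ 5 / 64) := mul_nonneg hsq0 (by linarith)
  linear_combination hrem

lemma potential_mul_one_add_le (hs : 0 ≤ s) (ht : |t| ≤ 1 / 20) (h : 0 ≤ s + t * (s + 1600)) :
    potential (s + t * (s + 1600)) ≤ potential s * (1 - t / 3 + t ^ 2 / 4) := by
  have hpos := potential_pos hs
  have hq : 0 ≤ 1 - t / 3 + t ^ 2 / 4 := by linarith [(abs_le.1 ht).2, sq_nonneg t]
  rw [potential_le_iff h (by positivity)]
  calc (1 : ℝ) ≤ potential s ^ 3 * (s + 1600) * ((1 - t / 3 + t ^ 2 / 4) ^ 3 * (1 + t)) := by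
        rw [potential_pow_three_mul hs, one_mul]
        exact one_le_taylor_pow_three_mul ht
    _ = (potential s * (1 - t / 3 + t ^ 2 / 4)) ^ 3 * (s + t * (s + 1600) + 1600) := by ring

lemma potential_add_one_mul_le (hs : 0 ≤ s) :
    potential (s + 1) * (1 + 1 / (3 * (s + 1601))) ≤ potential s := by
  rw [mul_comm]
  refine mul_potential_le_potential hs (by linarith) (by positivity) ?_
  obtain ⟨v, hv, rfl⟩ : ∃ v, 0 < v ∧ s = v - 1601 := ⟨s + 1601, by linarith, by ring⟩
  calc (1 + 1 / (3 * (v - 1601 + 1601))) ^ 3 * (v - 1601 + 1600)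
      = v - (18 * v ^ 2 + 8 * v + 1) / (27 * v ^ 3) := by
        field_simp
        ring
    _ ≤ v := sub_le_self _ (by positivity)
    _ = v - 1601 + 1 + 1600 := by ring

lemma potential_sqNorm_add_single_add_le (x : V d) (i : Fin d) :
    potential (sqNorm (x + Pi.single i 1)) + potential (sqNorm (x + Pi.single i (-1))) ≤
      potential (sqNorm x + 1) * (2 + (2 * x i / (sqNorm x + 1601)) ^ 2 / 2) := by
  have hs := sqNorm_nonneg x
  set s := sqNorm x with hsx
  have hv : 0 < s + 1601 := by linarith
  set t := 2 * x i / (s + 1601)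
  have htv : t * (s + 1601) = 2 * x i := by simp only [t]; field_simp
  have ht : |t| ≤ 1 / 20 := by
    rw [abs_div, abs_of_pos hv, div_le_iff₀ hv]
    refine abs_le_of_sq_le_sq ?_ (by positivity)
    nlinarith [sq_apply_le_sqNorm x i]
  have e₁ : sqNorm (x + Pi.single i 1) = s + 1 + t * (s + 1 + 1600) := by
    rw [sqNorm_add_single, ← hsx]
    push_cast
    linear_combination -htv
  have e₂ : sqNorm (x + Pi.single i (-1)) = s + 1 + -t * (s + 1 + 1600) := by
    rw [sqNorm_add_single, ← hsx]
    push_cast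
    linear_combination htv
  have h₁ := potential_mul_one_add_le (by linarith) ht (e₁ ▸ sqNorm_nonneg _)
  have h₂ := potential_mul_one_add_le (by linarith) (by rwa [abs_neg]) (e₂ ▸ sqNorm_nonneg _)
  rw [e₁, e₂]
  linear_combination h₁ + h₂

theorem nbrAvg_potential_sqNorm_le (hd : 3 ≤ d) (x : V d) :
    nbrAvg (fun y ↦ potential (sqNorm y)) x ≤ potential (sqNorm x) := by
  have hd' : (3 : ℝ) ≤ d := by exact_mod_cast hd
  have hs := sqNorm_nonneg x
  set s := sqNorm x with hsx
  set v := s + 1601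
  have hv : 0 < v := by linarith
  have hpos := potential_pos (by linarith : 0 ≤ s + 1)
  calc nbrAvg (fun y ↦ potential (sqNorm y)) x
      ≤ (∑ i, potential (s + 1) * (2 + (2 * x i / v) ^ 2 / 2)) / (2 * d) := by
        rw [nbrAvg_eq_sum_div]
        gcongr with i
        exact potential_sqNorm_add_single_add_le x i
    _ = potential (s + 1) * (1 + s / (d * v ^ 2)) := by
        simp only [← mul_sum, sum_add_distrib, div_pow, mul_pow, ← sum_div, sum_const, card_univ,
          Fintype.card_fin, nsmul_eq_mul]
        rw [← sqNorm, ← hsx]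
        field_simp
    _ ≤ potential (s + 1) * (1 + 1 / (3 * v)) := by
        have : s / (d * v ^ 2) ≤ 1 / (3 * v) := by
          rw [div_le_div_iff₀ (by positivity) (by positivity)]
          nlinarith
        gcongr
    _ ≤ potential s := potential_add_one_mul_le hs

end Potential

section AvoidProb

/-- The probability that simple random walk from `x` does not visit `A` at any time up to the
minimum of `t` and its first exit from `D`, by the recursion given by the Markov property. -/
noncomputable def avoidProbUpTo (D A : Set (V d)) : ℕ → V d → ℝ
  | 0, x => if x ∈ A then 0 else 1
  | t + 1, x => if x ∈ A then 0 else if x ∈ D then nbrAvg (avoidProbUpTo D A t) x else 1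

/-- The probability that simple random walk from `x` does not visit `A` up to its first exit
from `D`. -/
noncomputable def avoidProb (D A : Set (V d)) (x : V d) : ℝ := ⨅ t, avoidProbUpTo D A t x

variable {D D' A : Set (V d)} {x : V d}

lemma avoidProbUpTo_of_mem (hx : x ∈ A) (t : ℕ) : avoidProbUpTo D A t x = 0 := by
  cases t <;> simp [avoidProbUpTo, hx]

lemma avoidProbUpTo_zero_of_notMem (hx : x ∉ A) : avoidProbUpTo D A 0 x = 1 := by
  simp [avoidProbUpTo, hx]

lemma avoidProbUpTo_succ_of_mem (hx : x ∉ A) (hD : x ∈ D) (t : ℕ) :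
    avoidProbUpTo D A (t + 1) x = nbrAvg (avoidProbUpTo D A t) x := by
  simp [avoidProbUpTo, hx, hD]

lemma avoidProbUpTo_succ_of_notMem (hx : x ∉ A) (hD : x ∉ D) (t : ℕ) :
    avoidProbUpTo D A (t + 1) x = 1 := by
  simp [avoidProbUpTo, hx, hD]

lemma avoidProbUpTo_nonneg (D A : Set (V d)) (t : ℕ) (x : V d) : 0 ≤ avoidProbUpTo D A t x := by
  induction t generalizing x with
  | zero => rw [avoidProbUpTo]; split_ifs <;> norm_num
  | succ t ih =>
    rw [avoidProbUpTo]
    split_ifs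
    exacts [le_rfl, nbrAvg_nonneg fun p ↦ ih _, zero_le_one]

lemma avoidProb_le_avoidProbUpTo (t : ℕ) : avoidProb D A x ≤ avoidProbUpTo D A t x :=
  ciInf_le ⟨0, Set.forall_mem_range.2 fun t ↦ avoidProbUpTo_nonneg D A t x⟩ t

lemma avoidProb_nonneg (D A : Set (V d)) (x : V d) : 0 ≤ avoidProb D A x :=
  le_ciInf fun t ↦ avoidProbUpTo_nonneg D A t x

lemma avoidProb_of_mem (hx : x ∈ A) : avoidProb D A x = 0 :=
  (avoidProb_le_avoidProbUpTo 0).trans_eq (avoidProbUpTo_of_mem hx 0) |>.antisymm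
    (avoidProb_nonneg D A x)

lemma le_avoidProb_univ {v : V d → ℝ} (h1 : ∀ x, v x ≤ 1) (h0 : ∀ x ∈ A, v x ≤ 0)
    (hv : IsSubharmonicOn v Aᶜ) (x : V d) : v x ≤ avoidProb Set.univ A x := by
  refine le_ciInf fun t ↦ ?_
  induction t generalizing x with
  | zero => rw [avoidProbUpTo]; split_ifs with hx; exacts [h0 x hx, h1 x]
  | succ t ih =>
    by_cases hx : x ∈ A
    · exact (h0 x hx).trans_eq (avoidProbUpTo_of_mem hx _).symm
    · rw [avoidProbUpTo_succ_of_mem hx (Set.mem_univ x)]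
      exact (hv x hx).trans (nbrAvg_mono fun p ↦ ih _)

lemma reflect_notMem {i : Fin d} {c : ℤ} (hA : ∀ y ∈ A, y i ≤ c) (hx : x i ≤ c) (hxA : x ∉ A) :
    reflect i (2 * c) x ∉ A := fun h ↦ by
  have hc := hA _ h
  rw [reflect_apply_self] at hc
  rw [reflect_eq_self (by omega)] at h
  exact hxA h

lemma avoidProbUpTo_le_reflect {i : Fin d} {c : ℤ} (hA : ∀ y ∈ A, y i ≤ c) (hx : x i ≤ c) (t : ℕ) :
    avoidProbUpTo Set.univ A t x ≤ avoidProbUpTo Set.univ A t (reflect i (2 * c) x) := by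
  induction t generalizing x with
  | zero =>
    by_cases hxA : x ∈ A
    · rw [avoidProbUpTo_of_mem hxA]
      exact avoidProbUpTo_nonneg _ _ _ _
    · rw [avoidProbUpTo_zero_of_notMem hxA,
        avoidProbUpTo_zero_of_notMem (reflect_notMem hA hx hxA)]
  | succ t ih =>
    by_cases hxA : x ∈ A
    · rw [avoidProbUpTo_of_mem hxA]
      exact avoidProbUpTo_nonneg _ _ _ _
    obtain hxc | hxc := hx.eq_or_lt
    · rw [reflect_eq_self (by rw [hxc])]
    rw [avoidProbUpTo_succ_of_mem hxA (Set.mem_univ _),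
      avoidProbUpTo_succ_of_mem (reflect_notMem hA hx hxA) (Set.mem_univ _), ← nbrAvg_comp_reflect]
    refine nbrAvg_mono fun p ↦ ih ?_
    have := (abs_le.1 (abs_step_apply_le p i)).2
    rw [Pi.add_apply]
    omega

lemma avoidProb_le_reflect {i : Fin d} {c : ℤ} (hA : ∀ y ∈ A, y i ≤ c) (hx : x i ≤ c) :
    avoidProb Set.univ A x ≤ avoidProb Set.univ A (reflect i (2 * c) x) :=
  le_ciInf fun t ↦ (avoidProb_le_avoidProbUpTo t).trans (avoidProbUpTo_le_reflect hA hx t)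

variable [NeZero d]

lemma avoidProbUpTo_le_one (D A : Set (V d)) (t : ℕ) (x : V d) : avoidProbUpTo D A t x ≤ 1 := by
  induction t generalizing x with
  | zero => rw [avoidProbUpTo]; split_ifs <;> norm_num
  | succ t ih =>
    rw [avoidProbUpTo]
    split_ifs
    exacts [zero_le_one, (nbrAvg_mono fun p ↦ ih _).trans_eq (nbrAvg_const 1 x), le_rfl]

lemma avoidProb_le_one (D A : Set (V d)) (x : V d) : avoidProb D A x ≤ 1 :=
  (avoidProb_le_avoidProbUpTo 0).trans (avoidProbUpTo_le_one D A 0 x)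

lemma avoidProbUpTo_antitone (D A : Set (V d)) (x : V d) :
    Antitone fun t ↦ avoidProbUpTo D A t x := by
  refine antitone_nat_of_succ_le fun t ↦ ?_
  induction t generalizing x with
  | zero =>
    by_cases hx : x ∈ A
    · rw [avoidProbUpTo_of_mem hx, avoidProbUpTo_of_mem hx]
    · rw [avoidProbUpTo_zero_of_notMem hx]
      exact avoidProbUpTo_le_one D A _ x
  | succ t ih =>
    rw [avoidProbUpTo, avoidProbUpTo]
    split_ifs
    exacts [le_rfl, nbrAvg_mono fun p ↦ ih _, le_rfl]

lemma tendsto_avoidProbUpTo (D A : Set (V d)) (x : V d) :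
    Filter.Tendsto (fun t ↦ avoidProbUpTo D A t x) Filter.atTop (nhds (avoidProb D A x)) :=
  tendsto_atTop_ciInf (avoidProbUpTo_antitone D A x)
    ⟨0, Set.forall_mem_range.2 fun t ↦ avoidProbUpTo_nonneg D A t x⟩

lemma isHarmonicOn_avoidProb (D A : Set (V d)) : IsHarmonicOn (avoidProb D A) (D \ A) :=
  fun x hx ↦ by
    have hlim : Filter.Tendsto (fun t ↦ nbrAvg (avoidProbUpTo D A t) x) Filter.atTop
        (nhds (nbrAvg (avoidProb D A) x)) := by
      simp only [nbrAvg, expect_eq_sum_div_card]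
      exact (tendsto_finsetSum _ fun p _ ↦ tendsto_avoidProbUpTo D A _).div_const _
    refine tendsto_nhds_unique hlim
      (((tendsto_avoidProbUpTo D A x).comp (Filter.tendsto_add_atTop_nat 1)).congr fun t ↦ ?_)
    exact avoidProbUpTo_succ_of_mem hx.2 hx.1 t

lemma isHarmonicOn_avoidProb_univ (A : Set (V d)) : IsHarmonicOn (avoidProb Set.univ A) Aᶜ :=
  fun x hx ↦ isHarmonicOn_avoidProb Set.univ A x ⟨Set.mem_univ x, hx⟩

lemma isHarmonicOn_avoidProb_univ_of_forall_lt {U : Set (V d)} {i : Fin d} {a : ℤ}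
    (hA : ∀ y ∈ A, y i ≤ a) (hU : ∀ y ∈ U, a < y i) :
    IsHarmonicOn (avoidProb Set.univ A) U :=
  (isHarmonicOn_avoidProb_univ A).mono fun y hy hyA ↦ (hU y hy).not_ge (hA y hyA)

lemma avoidProb_anti_left (h : D ⊆ D') (A : Set (V d)) (x : V d) :
    avoidProb D' A x ≤ avoidProb D A x := by
  refine ciInf_mono ⟨0, Set.forall_mem_range.2 fun t ↦ avoidProbUpTo_nonneg D' A t x⟩ fun t ↦ ?_
  induction t generalizing x with
  | zero => rfl
  | succ t ih =>
    by_cases hA : x ∈ A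
    · rw [avoidProbUpTo_of_mem hA, avoidProbUpTo_of_mem hA]
    by_cases hD : x ∈ D
    · rw [avoidProbUpTo_succ_of_mem hA hD, avoidProbUpTo_succ_of_mem hA (h hD)]
      exact nbrAvg_mono fun p ↦ ih _
    · rw [avoidProbUpTo_succ_of_notMem hA hD]
      exact avoidProbUpTo_le_one D' A _ x

end AvoidProb

section Law

/-- The event that a path does not visit `A` at any time up to the minimum of `t` and its first
exit from `D`. -/
def avoidUpTo (D A : Set (V d)) (t : ℕ) : Set (ℕ → V d) :=
  {ω | ∀ j ≤ t, (∀ i < j, ω i ∈ D) → ω j ∉ A}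

/-- The path after its first step. -/
def pathTail (ω : ℕ → V d) (k : ℕ) : V d := ω (k + 1)

/-- The law of the path after its first step, conditioned on the first step being to `y`. -/
noncomputable def tailLaw (ν : Measure (ℕ → V d)) (y : V d) : Measure (ℕ → V d) :=
  (ProbabilityTheory.cond ν {ω | ω 1 = y}).map pathTail

variable {D A : Set (V d)} {ν : Measure (ℕ → V d)} {x : V d}

lemma adj_add_step (x : V d) (p : Fin d × ℤˣ) : adj x (x + step p) := by
  have h (i : Fin d) : |x i - (x + step p) i| = if i = p.1 then 1 else 0 := by
    have := Int.isUnit_iff_abs_eq.1 p.2.isUnit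
    rw [Pi.add_apply, step_apply, sub_add_cancel_left, abs_neg]
    split_ifs <;> simp [this]
  simp only [adj, h]
  simp

lemma step_injective : Function.Injective (step : Fin d × ℤˣ → V d) := by
  rintro ⟨i, ε⟩ ⟨j, δ⟩ h
  have hi := congrFun h i
  simp only [step_apply, if_true] at hi
  split_ifs at hi with hij
  · exact Prod.ext hij (Units.ext hi)
  · exact absurd hi ε.ne_zero

lemma measurableSet_apply_mem (j : ℕ) (s : Set (V d)) :
    MeasurableSet {ω : ℕ → V d | ω j ∈ s} :=
  measurable_pi_apply j (MeasurableSet.of_discrete (s := s))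

lemma measurable_pathTail : Measurable (pathTail (d := d)) :=
  measurable_pi_lambda _ fun k ↦ measurable_pi_apply (k + 1)

lemma measurableSet_avoidUpTo (D A : Set (V d)) (t : ℕ) : MeasurableSet (avoidUpTo D A t) := by
  have h : avoidUpTo D A t =
      ⋂ j ≤ t, ((⋂ i < j, {ω | ω i ∈ D})ᶜ ∪ {ω | ω j ∈ A}ᶜ) := by
    ext ω
    simp [avoidUpTo, imp_iff_not_or]
  rw [h]
  exact .biInter (Set.to_countable _) fun j _ ↦
    (MeasurableSet.biInter (Set.to_countable _) fun i _ ↦ measurableSet_apply_mem i D).compl.union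
      (measurableSet_apply_mem j A).compl

lemma mem_avoidUpTo_succ {t : ℕ} {ω : ℕ → V d} :
    ω ∈ avoidUpTo D A (t + 1) ↔ ω 0 ∉ A ∧ (ω 0 ∈ D → pathTail ω ∈ avoidUpTo D A t) := by
  refine ⟨fun h ↦ ⟨h 0 t.succ.zero_le (by simp), fun h0 j hj hD ↦ h (j + 1) (by omega) ?_⟩, ?_⟩
  · rintro (_ | i) hi
    exacts [h0, hD i (by omega)]
  · rintro ⟨h0, h⟩ (_ | j) hj hD
    exacts [h0, h (hD 0 (by omega)) j (by omega) fun i hi ↦ hD (i + 1) (by omega)]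

lemma coe_le_exitTimeE_iff {ω : ℕ → V d} {j : ℕ} :
    (j : ENat) ≤ exitTimeE D ω ↔ ∀ i < j, ω i ∈ D := by
  rw [exitTimeE]
  split_ifs with h
  · simp [Nat.le_find_iff]
  · push Not at h
    simp [h]

lemma setOf_avoidBeforeExit (D A : Set (V d)) :
    {ω | avoidBeforeExit D A ω} = ⋂ t, avoidUpTo D A t := by
  ext ω
  simp only [Set.mem_ofPred_eq, avoidBeforeExit, coe_le_exitTimeE_iff, Set.mem_iInter, avoidUpTo]
  exact ⟨fun h _ j _ ↦ h j, fun h j ↦ h j j le_rfl⟩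

lemma measurableSet_avoidBeforeExit (D A : Set (V d)) :
    MeasurableSet {ω | avoidBeforeExit D A ω} := by
  rw [setOf_avoidBeforeExit]
  exact .iInter fun t ↦ measurableSet_avoidUpTo D A t

lemma avoidBeforeExit_union {B : Set (V d)} {ω : ℕ → V d} :
    avoidBeforeExit D (A ∪ B) ω ↔ avoidBeforeExit D A ω ∧ avoidBeforeExit D B ω := by
  simp only [avoidBeforeExit, Set.mem_union, not_or, ← forall_and]

lemma IsSRWLaw.ae_apply_zero (hν : IsSRWLaw ν x) : ∀ᵐ ω ∂ν, ω 0 = x := by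
  have := hν.1
  have h : ν {ω | ω 0 = x} = 1 := by simpa using hν.2 0 (fun _ ↦ x) rfl (by simp)
  exact mem_ae_iff.2 ((prob_compl_eq_zero_iff (measurableSet_apply_mem 0 {x})).2 h)

lemma IsSRWLaw.measureReal_congr (hν : IsSRWLaw ν x) (E F : Set (ℕ → V d))
    (h : ∀ ω : ℕ → V d, ω 0 = x → (ω ∈ E ↔ ω ∈ F)) : ν.real E = ν.real F :=
  MeasureTheory.measureReal_congr (hν.ae_apply_zero.mono fun ω hω ↦ propext (h ω hω))

lemma IsSRWLaw.measureReal_avoidUpTo_of_mem (hν : IsSRWLaw ν x) (hx : x ∈ A) (t : ℕ) :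
    ν.real (avoidUpTo D A t) = 0 := by
  rw [hν.measureReal_congr (avoidUpTo D A t) ∅ fun ω hω ↦
    iff_of_false (fun h ↦ h 0 t.zero_le (by simp) (hω ▸ hx)) (Set.notMem_empty ω),
    measureReal_empty]

lemma IsSRWLaw.measure_pathTail_cylinder (hν : IsSRWLaw ν x) (n : ℕ) {γ : ℕ → V d}
    (h0 : adj x (γ 0)) (hγ : ∀ i < n, adj (γ i) (γ (i + 1))) :
    ν {ω | ∀ i ≤ n, pathTail ω i = γ i} = (2 * (d : ℝ≥0∞))⁻¹ ^ (n + 1) := by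
  obtain ⟨γ', h0', hsucc⟩ : ∃ γ' : ℕ → V d, γ' 0 = x ∧ ∀ k, γ' (k + 1) = γ k :=
    ⟨fun | 0 => x | k + 1 => γ k, rfl, fun _ ↦ rfl⟩
  have hγ' : ∀ i < n + 1, adj (γ' i) (γ' (i + 1)) := by
    rintro (_ | i) hi
    · rwa [h0', hsucc]
    · rw [hsucc, hsucc]
      exact hγ i (by omega)
  rw [← hν.2 (n + 1) γ' h0' hγ']
  refine measure_congr ?_
  filter_upwards [hν.ae_apply_zero] with ω hω
  refine propext ⟨?_, fun h i hi ↦ (h (i + 1) (by omega)).trans (hsucc i)⟩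
  rintro h (_ | i) hi
  exacts [hω.trans h0'.symm, (h i (by omega)).trans (hsucc i).symm]

lemma IsSRWLaw.measure_apply_one (hν : IsSRWLaw ν x) (p : Fin d × ℤˣ) :
    ν {ω | ω 1 = x + step p} = (2 * (d : ℝ≥0∞))⁻¹ := by
  simpa [pathTail] using
    hν.measure_pathTail_cylinder 0 (γ := fun _ ↦ x + step p) (adj_add_step x p) (by simp)

lemma tailLaw_apply (ν : Measure (ℕ → V d)) (y : V d) {E : Set (ℕ → V d)} (hE : MeasurableSet E) :
    tailLaw ν y E = (ν {ω | ω 1 = y})⁻¹ * ν ({ω | ω 1 = y} ∩ pathTail ⁻¹' E) := by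
  rw [tailLaw, Measure.map_apply measurable_pathTail hE]
  exact ProbabilityTheory.cond_apply (measurableSet_apply_mem 1 {y}) _ _

lemma two_mul_natCast_inv_ne_zero (n : ℕ) : (2 * (n : ℝ≥0∞))⁻¹ ≠ 0 :=
  ENNReal.inv_ne_zero.2 (ENNReal.mul_ne_top ENNReal.ofNat_ne_top (ENNReal.natCast_ne_top n))

lemma pairwise_disjoint_apply_one (x : V d) :
    Pairwise (Function.onFun Disjoint fun p ↦ {ω : ℕ → V d | ω 1 = x + step p}) :=
  fun _ _ hpq ↦ Set.disjoint_left.2 fun _ hp hq ↦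
    hpq (step_injective (add_left_cancel (hp.symm.trans hq)))

variable [NeZero d]

lemma IsSRWLaw.ae_apply_one (hν : IsSRWLaw ν x) : ∀ᵐ ω ∂ν, ∃ p, ω 1 = x + step p := by
  have := hν.1
  have hmeas (p : Fin d × ℤˣ) : MeasurableSet {ω : ℕ → V d | ω 1 = x + step p} :=
    measurableSet_apply_mem 1 {x + step p}
  have hone : ν (⋃ p, {ω | ω 1 = x + step p}) = 1 := by
    rw [measure_iUnion (pairwise_disjoint_apply_one x) hmeas, tsum_fintype]
    simp only [hν.measure_apply_one, sum_const, card_univ, Fintype.card_prod, Fintype.card_fin,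
      Fintype.card_units_int, nsmul_eq_mul, Nat.cast_mul, Nat.cast_ofNat, mul_comm (d : ℝ≥0∞)]
    exact ENNReal.mul_inv_cancel (by simpa using NeZero.ne d)
      (ENNReal.mul_ne_top ENNReal.ofNat_ne_top (ENNReal.natCast_ne_top d))
  filter_upwards [mem_ae_iff.2 ((prob_compl_eq_zero_iff (.iUnion hmeas)).2 hone)] with ω hω
  exact Set.mem_iUnion.1 hω

lemma IsSRWLaw.tail (hν : IsSRWLaw ν x) (p : Fin d × ℤˣ) :
    IsSRWLaw (tailLaw ν (x + step p)) (x + step p) := by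
  have := hν.1
  refine ⟨?_, fun n γ h0 hγ ↦ ?_⟩
  · have : IsProbabilityMeasure (ProbabilityTheory.cond ν {ω | ω 1 = x + step p}) :=
      ProbabilityTheory.cond_isProbabilityMeasure
        (hν.measure_apply_one p ▸ two_mul_natCast_inv_ne_zero d)
    exact Measure.isProbabilityMeasure_map measurable_pathTail.aemeasurable
  · have hcyl : MeasurableSet {ω : ℕ → V d | ∀ i ≤ n, ω i = γ i} := by
      simp only [Set.ofPred_forall]
      exact .iInter fun i ↦ .iInter fun _ ↦ measurableSet_apply_mem i {γ i}
    have hsub : {ω : ℕ → V d | ω 1 = x + step p} ∩ pathTail ⁻¹' {ω | ∀ i ≤ n, ω i = γ i} =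
        {ω | ∀ i ≤ n, pathTail ω i = γ i} :=
      Set.inter_eq_right.2 fun ω h ↦ (h 0 n.zero_le).trans h0
    rw [tailLaw_apply _ _ hcyl, hsub, hν.measure_apply_one,
      hν.measure_pathTail_cylinder n (h0 ▸ adj_add_step x p) hγ, pow_succ', ← mul_assoc,
      ENNReal.inv_mul_cancel (two_mul_natCast_inv_ne_zero d), one_mul]
    simpa using NeZero.ne d

lemma IsSRWLaw.measureReal_preimage_pathTail (hν : IsSRWLaw ν x) {E : Set (ℕ → V d)}
    (hE : MeasurableSet E) :
    ν.real (pathTail ⁻¹' E) = nbrAvg (fun y ↦ (tailLaw ν y).real E) x := by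
  have := hν.1
  have hsplit : ν.real (pathTail ⁻¹' E) =
      ∑ p, ν.real ({ω | ω 1 = x + step p} ∩ pathTail ⁻¹' E) := by
    rw [← measureReal_iUnion_fintype
      (fun p q hpq ↦ (pairwise_disjoint_apply_one x hpq).mono Set.inter_subset_left
        Set.inter_subset_left)
      fun p ↦ (measurableSet_apply_mem 1 {x + step p}).inter (measurable_pathTail hE),
      ← Set.iUnion_inter]
    refine MeasureTheory.measureReal_congr ?_
    filter_upwards [hν.ae_apply_one] with ω hω
    exact propext ⟨fun h ↦ ⟨Set.mem_iUnion.2 hω, h⟩, fun h ↦ h.2⟩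
  have htail (p : Fin d × ℤˣ) : (tailLaw ν (x + step p)).real E =
      2 * d * ν.real ({ω | ω 1 = x + step p} ∩ pathTail ⁻¹' E) := by
    simp [measureReal_def, tailLaw_apply _ _ hE, hν.measure_apply_one]
  simp only [hsplit, nbrAvg, htail, Fintype.expect_eq_sum_div_card, ← mul_sum,
    Fintype.card_prod, Fintype.card_fin, Fintype.card_units_int]
  have : (d : ℝ) ≠ 0 := NeZero.ne _
  push_cast
  field_simp

lemma IsSRWLaw.measureReal_avoidUpTo (hν : IsSRWLaw ν x) (D A : Set (V d)) (t : ℕ) :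
    ν.real (avoidUpTo D A t) = avoidProbUpTo D A t x := by
  induction t generalizing ν x with
  | zero =>
    have := hν.1
    by_cases hxA : x ∈ A
    · rw [hν.measureReal_avoidUpTo_of_mem hxA, avoidProbUpTo_of_mem hxA]
    · rw [avoidProbUpTo_zero_of_notMem hxA,
        hν.measureReal_congr (avoidUpTo D A 0) Set.univ fun ω hω ↦
          iff_of_true (fun j hj _ ↦ by rwa [Nat.le_zero.1 hj, hω]) (Set.mem_univ ω),
        probReal_univ]
  | succ t ih =>
    have := hν.1
    by_cases hxA : x ∈ A
    · rw [hν.measureReal_avoidUpTo_of_mem hxA, avoidProbUpTo_of_mem hxA]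
    by_cases hxD : x ∈ D
    · rw [avoidProbUpTo_succ_of_mem hxA hxD,
        hν.measureReal_congr _ (pathTail ⁻¹' avoidUpTo D A t) fun ω hω ↦ by
          simp [mem_avoidUpTo_succ, hω, hxA, hxD],
        hν.measureReal_preimage_pathTail (measurableSet_avoidUpTo D A t)]
      exact expect_congr rfl fun p _ ↦ ih (hν.tail p)
    · rw [avoidProbUpTo_succ_of_notMem hxA hxD, hν.measureReal_congr _ Set.univ fun ω hω ↦ by
        simp [mem_avoidUpTo_succ, hω, hxA, hxD], probReal_univ]

theorem IsSRWLaw.measureReal_avoidBeforeExit (hν : IsSRWLaw ν x) (D A : Set (V d)) :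
    ν.real {ω | avoidBeforeExit D A ω} = avoidProb D A x := by
  have := hν.1
  have hanti : Antitone (avoidUpTo D A) := fun s t hst ω hω j hj ↦ hω j (hj.trans hst)
  have hlim := (ENNReal.tendsto_toReal (measure_ne_top ν _)).comp (tendsto_measure_iInter_atTop
    (fun t ↦ (measurableSet_avoidUpTo D A t).nullMeasurableSet) hanti ⟨0, measure_ne_top ν _⟩)
  rw [setOf_avoidBeforeExit]
  exact tendsto_nhds_unique hlim
    ((tendsto_avoidProbUpTo D A x).congr fun t ↦ (hν.measureReal_avoidUpTo D A t).symm)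

theorem IsSRWLaw.cond_avoidBeforeExit (hν : IsSRWLaw ν x) (D A B : Set (V d)) :
    (ProbabilityTheory.cond ν {ω | avoidBeforeExit D A ω} {ω | avoidBeforeExit D B ω}).toReal =
      avoidProb D (A ∪ B) x / avoidProb D A x := by
  have hinter : {ω | avoidBeforeExit D A ω} ∩ {ω | avoidBeforeExit D B ω} =
      {ω | avoidBeforeExit D (A ∪ B) ω} := by
    ext ω
    exact avoidBeforeExit_union.symm
  rw [ProbabilityTheory.cond_apply (measurableSet_avoidBeforeExit D A), ENNReal.toReal_mul,
    ENNReal.toReal_inv, hinter, ← measureReal_def, ← measureReal_def,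
    hν.measureReal_avoidBeforeExit, hν.measureReal_avoidBeforeExit, inv_mul_eq_div]

end Law

section Barrier

variable {A B : Set (V d)} {x : V d} {i : Fin d}

lemma isSuperharmonicOn_potential_sqNorm_sub (hd : 3 ≤ d) (x : V d) :
    IsSuperharmonicOn (fun y ↦ potential (sqNorm (y - x))) Set.univ := fun y _ ↦ by
  simp only [sub_eq_add_neg]
  exact (nbrAvg_comp_add (fun y ↦ potential (sqNorm y)) (-x) y).trans_le
    (nbrAvg_potential_sqNorm_le hd (y + -x))

lemma avoidProb_sub_potential_le_avoidProb_union (hd : 3 ≤ d) {M : ℝ} (hM : 0 ≤ M)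
    (hB : ∀ y ∈ B, avoidProb Set.univ A y ≤ M * potential (sqNorm (y - x))) (y : V d) :
    avoidProb Set.univ A y - M * potential (sqNorm (y - x)) ≤ avoidProb Set.univ (A ∪ B) y := by
  have : NeZero d := ⟨by omega⟩
  have hpot (y : V d) : 0 ≤ M * potential (sqNorm (y - x)) :=
    mul_nonneg hM (potential_pos (sqNorm_nonneg _)).le
  refine le_avoidProb_univ (v := fun y ↦ avoidProb Set.univ A y - M * potential (sqNorm (y - x)))
    (fun y ↦ ?_) ?_ ?_ y
  · linarith [avoidProb_le_one Set.univ A y, hpot y]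
  · rintro y (hy | hy)
    · linarith [avoidProb_of_mem (D := Set.univ) hy, hpot y]
    · linarith [hB y hy]
  · exact ((isHarmonicOn_avoidProb_univ A).mono
      (Set.compl_subset_compl.2 Set.subset_union_left)).isSubharmonicOn.sub
      fun y _ ↦ (isSuperharmonicOn_potential_sqNorm_sub hd x).const_mul hM y (Set.mem_univ y)

lemma sqNorm_add_single_le_of_mem_cube {N : ℕ} {t : ℤ} (hx : x ∈ cube 0 N) (ht : |t| ≤ d * N) :
    sqNorm (x + Pi.single i t) ≤ (d ^ 2 + 3 * d) * (N : ℝ) ^ 2 := by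
  have hsq : sqNorm x ≤ d * (N : ℝ) ^ 2 := by simpa using sqNorm_sub_le_of_mem_cube hx
  have ht' : |(t : ℝ)| ≤ d * N := by exact_mod_cast ht
  have hxi : |(x i : ℝ)| ≤ N := by simpa [← Int.cast_abs] using Int.cast_le (R := ℝ).2 (hx i)
  have hmul : (t : ℝ) * x i ≤ d * N * N :=
    (le_abs_self _).trans (abs_mul (t : ℝ) _ ▸ mul_le_mul ht' hxi (abs_nonneg _) (by positivity))
  have hts : (t : ℝ) ^ 2 ≤ (d * N) ^ 2 := sq_le_sq' (neg_le_of_abs_le ht') (le_of_abs_le ht')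
  rw [sqNorm_add_single]
  nlinarith

lemma exists_abs_add_of_notMem_cube {N : ℕ} (hx : x ∉ cube 0 (2 * N)) :
    ∃ (i : Fin d) (s : ℤ), |s| ≤ d * N ∧ (d + 2) * N ≤ |x i + s| := by
  obtain ⟨i, hi⟩ := notMem_cube.1 hx
  have hdN : (0 : ℤ) ≤ d * N := by positivity
  rw [Pi.zero_apply, sub_zero, lt_abs] at hi
  push_cast at hi
  obtain hi | hi := hi
  · exact ⟨i, d * N, (abs_of_nonneg hdN).le, le_abs.2 (.inl (by linarith))⟩
  · exact ⟨i, -(d * N), (abs_neg (d * N : ℤ) ▸ abs_of_nonneg hdN).le, le_abs.2 (.inr (by linarith))⟩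

/- The potential is centred at distance `d * N` from the origin, on the side opposite to `y`, so
that every point of `cube 0 N` is closer to the centre than `y` by a fixed factor. -/
theorem exists_le_avoidProb_of_notMem_cube (hd : 3 ≤ d) :
    ∃ c : ℝ, 0 < c ∧ ∀ (N : ℕ) (A : Set (V d)), 1 ≤ N → A ⊆ cube 0 N →
      ∀ y ∉ cube 0 (2 * N), c ≤ avoidProb Set.univ A y := by
  have : NeZero d := ⟨by omega⟩
  set a : ℝ := d ^ 2 + 3 * d with ha
  set b : ℝ := (d + 2) ^ 2 with hb
  have ha0 : 0 ≤ a := by positivity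
  have hab : a < b := by rw [ha, hb]; linarith [(d.cast_nonneg : (0 : ℝ) ≤ d)]
  refine ⟨1 - potential b / potential a,
    sub_pos.2 ((div_lt_one (potential_pos ha0)).2 (potential_lt_potential ha0 hab)),
    fun N A hN hA y hy ↦ ?_⟩
  have hN2 : (1 : ℝ) ≤ (N : ℝ) ^ 2 := one_le_pow₀ (by exact_mod_cast hN)
  have haN : 0 < potential (a * (N : ℝ) ^ 2) := potential_pos (by positivity)
  obtain ⟨i, s, hs, hys⟩ := exists_abs_add_of_notMem_cube hy
  have hnear (z : V d) (hz : z ∈ A) : avoidProb Set.univ ∅ z ≤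
      (potential (a * (N : ℝ) ^ 2))⁻¹ * potential (sqNorm (z - Pi.single i (-s))) := by
    rw [inv_mul_eq_div, Pi.single_neg, sub_neg_eq_add]
    exact (avoidProb_le_one _ _ z).trans ((one_le_div haN).2
      (potential_anti (sqNorm_nonneg _) (sqNorm_add_single_le_of_mem_cube (hA hz) hs)))
  have hfar : b * (N : ℝ) ^ 2 ≤ sqNorm (y - Pi.single i (-s)) := by
    rw [hb, ← mul_pow]
    refine mod_cast sq_le_sqNorm_sub (n := (d + 2) * N) (i := i) ?_
    rw [Pi.single_eq_same, sub_neg_eq_add]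
    exact_mod_cast hys
  have hratio : (potential (a * (N : ℝ) ^ 2))⁻¹ * potential (sqNorm (y - Pi.single i (-s))) ≤
      potential b / potential a := by
    rw [inv_mul_eq_div, div_le_div_iff₀ haN (potential_pos ha0)]
    exact (mul_le_mul_of_nonneg_right (potential_anti (by positivity) hfar)
      (potential_pos ha0).le).trans (potential_mul_mul_potential_le ha0 hab.le hN2)
  have hone : 1 ≤ avoidProb Set.univ (∅ : Set (V d)) y :=
    le_avoidProb_univ (v := fun _ ↦ 1) (fun _ ↦ le_rfl) (by simp)
      (fun x _ ↦ (nbrAvg_const 1 x).ge) y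
  have hbarrier := avoidProb_sub_potential_le_avoidProb_union hd (inv_nonneg.2 haN.le) hnear y
  rw [Set.empty_union] at hbarrier
  linarith

end Barrier

section Box

variable {A : Set (V d)} {x : V d} {i : Fin d}

lemma avoidProb_add_single_le_avoidProb_add_single (hA : ∀ y ∈ A, y i ≤ x i) (m : ℕ) {s t : ℕ}
    (hst : s ≤ t) :
    avoidProb Set.univ A (x + Pi.single i ((2 * s + 1) * m : ℤ)) ≤
      avoidProb Set.univ A (x + Pi.single i ((2 * t + 1) * m : ℤ)) := by
  have hsm : (s * m : ℤ) ≤ t * m := by exact_mod_cast Nat.mul_le_mul_right m hst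
  have hm : (0 : ℤ) ≤ (s + t + 1) * m := by positivity
  have hreflect : reflect i (2 * (x i + (s + t + 1) * m)) (x + Pi.single i ((2 * s + 1) * m : ℤ)) =
      x + Pi.single i ((2 * t + 1) * m : ℤ) := by
    ext j
    by_cases hj : j = i
    · subst hj
      simp only [reflect_apply_self, Pi.add_apply, Pi.single_eq_same]
      ring
    · simp only [reflect_apply_of_ne hj, Pi.add_apply, Pi.single_eq_of_ne hj]
  rw [← hreflect]
  refine avoidProb_le_reflect (fun y hy ↦ by linarith [hA y hy]) ?_
  rw [Pi.add_apply, Pi.single_eq_same]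
  linarith

lemma le_pow_mul_of_forall_add_le {f : ℕ → ℝ} {C : ℝ} {r : ℕ} (hC : 0 ≤ C)
    (h : ∀ s, ∀ t ≤ r, f (s + t) ≤ C * f s) (k : ℕ) : ∀ t ≤ k * r, f t ≤ C ^ k * f 0 := by
  induction k with
  | zero =>
    intro t ht
    obtain rfl : t = 0 := by simpa using ht
    simp
  | succ k ih =>
    intro t ht
    have hstep := h (t - r) (t - (t - r)) (by omega)
    rw [Nat.add_sub_cancel' (Nat.sub_le t r)] at hstep
    rw [pow_succ', mul_assoc]
    have hprev := ih (t - r) (by rw [Nat.succ_mul] at ht; omega)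
    exact hstep.trans (mul_le_mul_of_nonneg_left hprev hC)

lemma exists_le_mul_of_isHarmonicOn_halfspace (d : ℕ) [NeZero d] (B : ℕ) :
    ∃ C : ℝ, 0 < C ∧ ∀ (u : V d → ℝ) (x : V d) (i : Fin d) (m : ℕ), 1 ≤ m → (∀ y, 0 ≤ u y) →
      IsHarmonicOn u {y | x i + (m / 2 : ℕ) < y i} →
        u (x + Pi.single i ((2 * B + 1) * m : ℤ)) ≤ C * u (x + Pi.single i (m : ℤ)) := by
  obtain ⟨C, A, hC, hA, harnack⟩ := exists_harnack_axis d
  refine ⟨C ^ (4 * A * B), by positivity, fun u x i m hm hu hharm ↦ ?_⟩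
  set f : ℕ → ℝ := fun k ↦ u (x + Pi.single i (m + k : ℤ)) with hf
  obtain ⟨R, hR⟩ : ∃ R, m = m / 2 + 1 + R := ⟨m - m / 2 - 1, by omega⟩
  have hstep (s t : ℕ) (ht : t ≤ R / A + 1) : f (s + t) ≤ C * f s := by
    have hball : IsHarmonicOn u (cube (x + Pi.single i (m + s : ℤ)) R) :=
      hharm.mono fun y hy ↦ by
        have := abs_le.1 (hy i)
        rw [Pi.add_apply, Pi.single_eq_same] at this
        rw [Set.mem_ofPred_eq]
        omega
    have hAt : A * (t - 1) ≤ R :=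
      (Nat.mul_le_mul_left A (Nat.sub_le_of_le_add ht)).trans (Nat.mul_div_le R A)
    have hharnack := harnack u _ R t i hu hball hAt
    rw [add_assoc, ← Pi.single_add, add_assoc] at hharnack
    simpa only [hf, Nat.cast_add] using hharnack
  have hlen : 2 * B * m ≤ 4 * A * B * (R / A + 1) := by
    have hAR : R < A * (R / A + 1) := Nat.lt_mul_div_succ R hA
    calc 2 * B * m ≤ 2 * B * (2 * (A * (R / A + 1))) := Nat.mul_le_mul_left _ (by omega)
      _ = 4 * A * B * (R / A + 1) := by ring
  have hchain := le_pow_mul_of_forall_add_le (by linarith) hstep (4 * A * B) _ hlen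
  have hend : ((2 * B + 1) * m : ℤ) = m + (2 * B * m : ℕ) := by push_cast; ring
  rw [hend]
  simpa only [hf, Nat.cast_zero, add_zero] using hchain

lemma exists_avoidProb_le_mul_of_mem_cube (d : ℕ) [NeZero d] :
    ∃ (C : ℝ) (T : ℕ), 1 ≤ C ∧ ∀ (A : Set (V d)) (x : V d) (i : Fin d) (m : ℕ), 1 ≤ m →
      (∀ y ∈ A, y i ≤ x i) → ∀ y ∈ cube x (m / 2),
        avoidProb Set.univ A y ≤
          C * avoidProb Set.univ A (x + Pi.single i ((2 * T + 1) * m : ℤ)) := by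
  obtain ⟨C, T, hC, -, harnack⟩ := exists_harnack d
  refine ⟨C, T, hC, fun A x i m hm hA y hy ↦ ?_⟩
  obtain ⟨H, hH⟩ : ∃ H : ℕ, H = (2 * T + 1) * m := ⟨_, rfl⟩
  have hHm : H = T * m + T * m + m := by rw [hH]; ring
  have hHz : ((2 * T + 1) * m : ℤ) = H := by rw [hH]; push_cast; ring
  rw [hHz]
  have hharm : IsHarmonicOn (avoidProb Set.univ A) (cube (x + Pi.single i (H : ℤ)) (T * m)) :=
    isHarmonicOn_avoidProb_univ_of_forall_lt hA fun w hw ↦ by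
      have := abs_le.1 (hw i)
      rw [Pi.add_apply, Pi.single_eq_same] at this
      omega
  have hyi := abs_le.1 (hy i)
  refine (avoidProb_le_reflect (i := i) (c := x i + (H + 1) / 2) (fun w hw ↦ ?_) (by omega)).trans
    (harnack _ _ m hm (avoidProb_nonneg _ A) hharm _ fun j ↦ ?_)
  · have := hA w hw
    omega
  by_cases hj : j = i
  · subst hj
    rw [reflect_apply_self, Pi.add_apply, Pi.single_eq_same, abs_le]
    omega
  · rw [reflect_apply_of_ne hj, Pi.add_apply, Pi.single_eq_of_ne hj, add_zero]
    have := hy j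
    omega

lemma mul_potential_sq_le_potential {m B : ℕ} {c : ℝ} (hm : 1 ≤ m) (hc : 0 ≤ c)
    (hB : c ^ 3 * (d + 1600) ≤ B) :
    c * potential (((2 * B + 1) * m) ^ 2) ≤ potential (d * (m / 2 : ℕ) ^ 2) := by
  refine mul_potential_le_potential (by positivity) (sq_nonneg _) hc ?_
  have hm1 : (1 : ℝ) ≤ m := by exact_mod_cast hm
  have hfloor : ((m / 2 : ℕ) : ℝ) ^ 2 ≤ m ^ 2 :=
    pow_le_pow_left₀ (Nat.cast_nonneg _) (by exact_mod_cast Nat.div_le_self m 2) 2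
  have hdm := mul_le_mul_of_nonneg_left hfloor d.cast_nonneg
  have hnum : d * (m / 2 : ℕ) ^ 2 + 1600 ≤ (d + 1600) * (m : ℝ) ^ 2 := by
    linarith [one_le_pow₀ hm1 (n := 2)]
  calc c ^ 3 * (d * (m / 2 : ℕ) ^ 2 + 1600) ≤ c ^ 3 * ((d + 1600) * m ^ 2) :=
        mul_le_mul_of_nonneg_left hnum (by positivity)
    _ ≤ B * m ^ 2 := by
        rw [← mul_assoc]
        exact mul_le_mul_of_nonneg_right hB (sq_nonneg _)
    _ ≤ (2 * B + 1) ^ 2 * m ^ 2 :=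
        mul_le_mul_of_nonneg_right (by nlinarith [B.cast_nonneg (α := ℝ)]) (sq_nonneg _)
    _ ≤ ((2 * B + 1) * m) ^ 2 + 1600 := by rw [mul_pow]; linarith

lemma exists_avoidProb_le_two_mul_avoidProb_union_cube (hd : 3 ≤ d) :
    ∃ B : ℕ, ∀ (A : Set (V d)) (x : V d) (i : Fin d) (m : ℕ), 1 ≤ m → (∀ y ∈ A, y i ≤ x i) →
      avoidProb Set.univ A (x + Pi.single i (m : ℤ)) ≤
        2 * avoidProb Set.univ (A ∪ cube x (m / 2)) (x + Pi.single i ((2 * B + 1) * m : ℤ)) := by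
  have : NeZero d := ⟨by omega⟩
  obtain ⟨C, T, hC, hcube⟩ := exists_avoidProb_le_mul_of_mem_cube d
  obtain ⟨B, hB⟩ := exists_nat_ge ((2 * C) ^ 3 * (d + 1600) + T)
  have hC0 : 0 ≤ (2 * C) ^ 3 * (d + 1600) := by positivity
  have hTB : T ≤ B := by exact_mod_cast (le_add_of_nonneg_left hC0).trans hB
  refine ⟨B, fun A x i m hm hA ↦ ?_⟩
  set z := x + Pi.single i ((2 * B + 1) * m : ℤ) with hz
  have hbase : avoidProb Set.univ A (x + Pi.single i (m : ℤ)) ≤ avoidProb Set.univ A z := by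
    simpa using avoidProb_add_single_le_avoidProb_add_single hA m (Nat.zero_le B)
  set s : ℝ := d * (m / 2 : ℕ) ^ 2
  have hs0 : 0 ≤ s := by positivity
  have hpot := potential_pos hs0
  have hbox (y : V d) (hy : y ∈ cube x (m / 2)) : avoidProb Set.univ A y ≤
      C * avoidProb Set.univ A z / potential s * potential (sqNorm (y - x)) := by
    rw [div_mul_eq_mul_div, le_div_iff₀ hpot]
    have hyz := (hcube A x i m hm hA y hy).trans (mul_le_mul_of_nonneg_left
      (avoidProb_add_single_le_avoidProb_add_single hA m hTB) (by linarith))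
    exact mul_le_mul hyz (potential_anti (sqNorm_nonneg _) (sqNorm_sub_le_of_mem_cube hy))
      hpot.le ((avoidProb_nonneg _ _ _).trans hyz)
  have hbarrier := avoidProb_sub_potential_le_avoidProb_union hd
    (div_nonneg (mul_nonneg (by linarith) (avoidProb_nonneg _ A z)) hpot.le) hbox z
  have hhalf : 2 * C * potential (sqNorm (z - x)) ≤ potential s := by
    rw [hz, add_sub_cancel_left, sqNorm_single]
    push_cast
    exact mul_potential_sq_le_potential hm (by linarith)
      (le_of_add_le_of_nonneg_left hB T.cast_nonneg)
  have hloss : 2 * (C * avoidProb Set.univ A z / potential s * potential (sqNorm (z - x))) ≤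
      avoidProb Set.univ A z := by
    rw [← le_div_iff₀' two_pos, div_mul_eq_mul_div, div_le_iff₀ hpot]
    linarith [mul_le_mul_of_nonneg_left hhalf (avoidProb_nonneg Set.univ A z)]
  linarith

theorem exists_mul_avoidProb_le_avoidProb_union_cube (hd : 3 ≤ d) :
    ∃ c : ℝ, 0 < c ∧ ∀ (A : Set (V d)) (x : V d) (i : Fin d) (m : ℕ), 1 ≤ m →
      (∀ y ∈ A, y i ≤ x i) →
        c * avoidProb Set.univ A (x + Pi.single i (m : ℤ)) ≤
          avoidProb Set.univ (A ∪ cube x (m / 2)) (x + Pi.single i (m : ℤ)) := by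
  have : NeZero d := ⟨by omega⟩
  obtain ⟨B, hB⟩ := exists_avoidProb_le_two_mul_avoidProb_union_cube hd
  obtain ⟨C, hC, hdescend⟩ := exists_le_mul_of_isHarmonicOn_halfspace d B
  refine ⟨(2 * C)⁻¹, by positivity, fun A x i m hm hA ↦ ?_⟩
  have hbelow : ∀ y ∈ A ∪ cube x (m / 2), y i ≤ x i + (m / 2 : ℕ) := by
    rintro y (hy | hy)
    · have := hA y hy
      omega
    · have := abs_le.1 (hy i)
      omega
  have hup := hB A x i m hm hA
  have hdown := hdescend _ x i m hm (avoidProb_nonneg Set.univ (A ∪ cube x (m / 2)))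
    (isHarmonicOn_avoidProb_univ_of_forall_lt hbelow fun _ ↦ id)
  rw [inv_mul_le_iff₀ (by positivity)]
  linarith

end Box

section Comparison

variable {A D W : Set (V d)} {x : V d} {i : Fin d} {N m : ℕ} {c : ℝ}

lemma mul_avoidProb_le_avoidProb_univ [NeZero d] (hW : W.Finite) (hc : 0 ≤ c)
    (houtside : ∀ y ∉ W, c ≤ avoidProb Set.univ A y) (hx : x ∈ W) :
    c * avoidProb W A x ≤ avoidProb Set.univ A x := by
  by_cases hxA : x ∈ A
  · rw [avoidProb_of_mem hxA, avoidProb_of_mem hxA, mul_zero]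
  have hW' : IsSubharmonicOn (fun y ↦ c * avoidProb W A y) (W \ A) :=
    ((isHarmonicOn_avoidProb W A).const_mul c).isSubharmonicOn
  have huniv : IsSuperharmonicOn (avoidProb Set.univ A) (W \ A) :=
    ((isHarmonicOn_avoidProb_univ A).mono fun _ hy ↦ hy.2).isSuperharmonicOn
  refine hW'.le_of_isSuperharmonicOn hW.sdiff huniv (fun y _ p hp ↦ ?_) x ⟨hx, hxA⟩
  by_cases hpA : y + step p ∈ A
  · rw [avoidProb_of_mem hpA, avoidProb_of_mem hpA, mul_zero]
  · exact (mul_le_of_le_one_right hc (avoidProb_le_one W A _)).trans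
      (houtside _ fun hpW ↦ hp ⟨hpW, hpA⟩)

lemma avoidProb_univ_add_single_pos (hd : 3 ≤ d) (hN : 1 ≤ N) (hA : A ⊆ cube 0 N)
    (hAx : ∀ y ∈ A, y i ≤ x i) (hm : 1 ≤ m) :
    0 < avoidProb Set.univ A (x + Pi.single i (m : ℤ)) := by
  have : NeZero d := ⟨by omega⟩
  obtain ⟨c, hc, houtside⟩ := exists_le_avoidProb_of_notMem_cube hd
  obtain ⟨B, hB⟩ : ∃ B : ℕ, B = (x i).natAbs + N := ⟨_, rfl⟩
  obtain ⟨C, hC, hdescend⟩ := exists_le_mul_of_isHarmonicOn_halfspace d B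
  have hfar : x + Pi.single i ((2 * B + 1) * m : ℤ) ∉ cube 0 (2 * N) := fun h ↦ by
    have := abs_le.1 (h i)
    rw [Pi.add_apply, Pi.single_eq_same, Pi.zero_apply] at this
    have : (2 * B + 1 : ℤ) ≤ (2 * B + 1) * m := le_mul_of_one_le_right (by positivity) (mod_cast hm)
    omega
  have hharm : IsHarmonicOn (avoidProb Set.univ A) {y | x i + (m / 2 : ℕ) < y i} :=
    isHarmonicOn_avoidProb_univ_of_forall_lt hAx fun y hy ↦ by
      rw [Set.mem_ofPred_eq] at hy
      omega
  exact pos_of_mul_pos_right ((hc.trans_le (houtside N A hN hA _ hfar)).trans_le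
    (hdescend _ x i m hm (avoidProb_nonneg _ A) hharm)) hC.le

end Comparison

theorem exists_mul_avoidProb_le_avoidProb_union_cube_of_subset (hd : 3 ≤ d) :
    ∃ c : ℝ, 0 < c ∧ ∀ (N m : ℕ) (D A : Set (V d)) (x : V d) (i : Fin d), 1 ≤ N → 1 ≤ m →
      cube 0 (2 * N) ⊆ D → A ⊆ cube 0 N → (∀ y ∈ A, y i ≤ x i) →
      x + Pi.single i (m : ℤ) ∈ cube 0 (2 * N) →
        c * avoidProb D A (x + Pi.single i (m : ℤ)) ≤
          avoidProb D (A ∪ cube x (m / 2)) (x + Pi.single i (m : ℤ)) := by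
  have : NeZero d := ⟨by omega⟩
  obtain ⟨c, hc, hbox⟩ := exists_mul_avoidProb_le_avoidProb_union_cube hd
  obtain ⟨c', hc', houtside⟩ := exists_le_avoidProb_of_notMem_cube hd
  refine ⟨c * c', by positivity, fun N m D A x i hN hm hD hA hAx hz ↦ ?_⟩
  set z := x + Pi.single i (m : ℤ)
  calc c * c' * avoidProb D A z ≤ c * (c' * avoidProb (cube 0 (2 * N)) A z) := by
        rw [mul_assoc]
        gcongr
        exact avoidProb_anti_left hD A z
    _ ≤ c * avoidProb Set.univ A z := by
        gcongr
        exact mul_avoidProb_le_avoidProb_univ (finite_cube _ _) hc'.le (houtside N A hN hA) hz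
    _ ≤ avoidProb Set.univ (A ∪ cube x (m / 2)) z := hbox A x i m hm hAx
    _ ≤ avoidProb D (A ∪ cube x (m / 2)) z := avoidProb_anti_left (Set.subset_univ D) _ z

theorem avoid_box_given_avoid_K_general (hd : 3 ≤ d) :
    ∃ c : ℝ, 0 < c ∧ ∀ (N m : ℕ) (D 𝒦 : Set (V d)) (x₀ : V d) (i : Fin d), 1 ≤ N → 1 ≤ m →
      cube 0 (2 * N) ⊆ D → 𝒦 ⊆ cube 0 N → (∀ y ∈ 𝒦, y i ≤ x₀ i) →
      x₀ + Pi.single i (m : ℤ) ∈ cube 0 (2 * N) →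
      ∀ ν : Measure (ℕ → V d), IsSRWLaw ν (x₀ + Pi.single i (m : ℤ)) →
        c ≤ (ProbabilityTheory.cond ν {ω | avoidBeforeExit D 𝒦 ω}
          {ω | avoidBeforeExit D (cube x₀ (m / 2)) ω}).toReal := by
  have : NeZero d := ⟨by omega⟩
  obtain ⟨c, hc, hbox⟩ := exists_mul_avoidProb_le_avoidProb_union_cube_of_subset hd
  refine ⟨c, hc, fun N m D 𝒦 x₀ i hN hm hD h𝒦 hx₀ hz ν hν ↦ ?_⟩
  have hpos : 0 < avoidProb D 𝒦 (x₀ + Pi.single i (m : ℤ)) :=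
    (avoidProb_univ_add_single_pos hd hN h𝒦 hx₀ hm).trans_le
      (avoidProb_anti_left (Set.subset_univ D) 𝒦 _)
  rw [hν.cond_avoidBeforeExit, le_div_iff₀ hpos]
  exact hbox N m D 𝒦 x₀ i hN hm hD h𝒦 hx₀ hz

lemma smul_unitVec (a : ℤ) (i : Fin d) : a • unitVec i = (Pi.single i a : V d) := by
  ext j
  simp [unitVec, Pi.single_apply, Fin.ext_iff]

/-- Lemma 3.5.  Let `d ≥ 3`, `N ≥ 1`, `Q_{4N} ⊆ D ⊆ ℤ^d`, `8 ≤ m ≤ N/2`, `n ≤ N`.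
For any nonempty `𝒦 ⊆ Q_n`, `x₀ ∈ 𝒦 ∩ H_n` and `z₀ = x₀ + m e₁`, there is a constant
`c = c(d) > 0` with `P^{z₀}( T_{Q(x₀,m/2)} > τ_D | T_𝒦 > τ_D ) ≥ c`. -/
theorem avoid_box_given_avoid_K :
    ∀ d : ℕ, 3 ≤ d → ∃ c : ℝ, 0 < c ∧
      ∀ (N n m : ℕ) (D 𝒦 : Set (V d)) (x₀ : V d),
        1 ≤ N → cube 0 (4 * N) ⊆ D → 8 ≤ m → m ≤ N / 2 → n ≤ N →
        𝒦.Nonempty → 𝒦 ⊆ cube 0 n → x₀ ∈ 𝒦 →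
        (∀ i : Fin d, (i : ℕ) = 0 → x₀ i = (n : ℤ)) →
        ∀ ν : Measure (ℕ → V d), IsSRWLaw ν (x₀ + (m : ℤ) • unitVec 0) →
          c ≤ (ProbabilityTheory.cond ν
                { ω | avoidBeforeExit D 𝒦 ω }
                { ω | avoidBeforeExit D (cube x₀ (m / 2)) ω }).toReal := by
  intro d hd
  obtain ⟨c, hc, hgeneral⟩ := avoid_box_given_avoid_K_general hd
  refine ⟨c, hc, fun N n m D 𝒦 x₀ hN hD hm hmN hnN _ h𝒦 hx₀ hx₀n ν hν ↦ ?_⟩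
  let e₁ : Fin d := ⟨0, by omega⟩
  rw [smul_unitVec (m : ℤ) e₁] at hν
  refine hgeneral N m D 𝒦 x₀ e₁ hN (by omega) ((cube_subset_cube (by omega)).trans hD)
    (h𝒦.trans (cube_subset_cube hnN)) (fun y hy ↦ ?_)
    (cube_subset_cube (by omega) (mem_cube_add (h𝒦 hx₀) (add_single_mem_cube x₀ e₁ m))) ν hν
  rw [hx₀n e₁ rfl]
  simpa using (abs_le.1 (h𝒦 hy e₁)).2

end USFPaper
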